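/- arXiv:1608.01463 — 3 statements merged into one kernel-verified Lean document; each statement's English description precedes it below -/
import Mathlib

section
/- Let G=(V,E) be a multigraph without self-loops and let s ∈ V. Then the minimum size of an s-cycle cover of G equals the maximum size of an s-cycle packing of G; moreover, both optima are attained by half-integral solutions, i.e., there exist an s-cycle cover x with values in {0,1/2,1} and an s-cycle packing y with values in {0,1/2,1} such that Σ_{v∈V} x(v) = Σ_{C∈𝒞_s} y(C), x has minimum size among all s-cycle covers, and y has maximum size among all s-cycle packings. -/
/-!
Covers and packings of `s`-cycles are dual linear programs, so there are optimal solutions `x` and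
`y` which satisfy complementary slackness; weak duality then certifies any half-integral cover and
packing of equal size.

*Cover.* Let the zero region consist of the `x`-null vertices joined to `s` through `x`-null
vertices, and round `x` to the number of edges by which a vertex outside the zero region is joined
to it, truncated at two and halved. As the way back to `s` through the zero region costs nothing, on
an `s`-cycle of `x`-weight `1` only the first and the last vertex of positive weight can be joined
to the zero region, and there is no other vertex of positive weight if one of them is joined to it
by two edges. So the rounded weight of the cycle is at most `1`; together with complementary
slackness this bounds the size of the rounded cover by that of `y`.

*Packing.* Recording for each edge how often `y` traverses it turns `y` into a point of the polytope
of edge weights in which every vertex `v ≠ s` has degree at most `2` and every edge at `v` carries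
at most half of that degree; the degree of `s` is twice the size of `y`. At an extreme point
maximizing the degree of `s`, one equation for each vertex `v ≠ s` with at least two fractional
edges determines the fractional weights. Counting edge ends, each such vertex then has exactly two
fractional edges, and all other vertices have none. As the equations are also satisfied by the
direction which moves the fractional weights towards `1 / 2`, those weights equal `1 / 2` already.
Doubling the weights gives multiplicities of edges whose copies at each `v ≠ s` can be paired
without pairing two copies of the same edge; following the pairing from `s` traces every `s`-cycle
of a half-integral packing twice, once in each direction.
-/

/-- A multigraph on vertex type `V` with edge type `E`: each edge has an
unordered pair of endpoints.  Parallel edges are distinguished (they are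
different elements of `E`), and self-loops are edges whose endpoint pair is
diagonal. -/
structure Multigraph (V : Type) (E : Type) where
  ends : E → Sym2 V

namespace Multigraph

variable {V E : Type}

/-- A multigraph has no self-loops. -/
def LoopFree (G : Multigraph V E) : Prop := ∀ e : E, ¬ (G.ends e).IsDiag

/-- The degree of a vertex: the number of incident edges (parallel edges
counted with multiplicity). -/
noncomputable def degree (G : Multigraph V E) (v : V) : ℕ :=
  Nat.card {e : E // v ∈ G.ends e}

/-- A walk `(v₀, e₁, v₁, …, e_l, v_l)` of positive length `l ≥ 1` in which
each edge `eᵢ` joins `v_{i-1}` and `vᵢ`. -/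
structure Walk (G : Multigraph V E) where
  len : ℕ
  len_pos : 0 < len
  verts : Fin (len + 1) → V
  edges : Fin len → E
  valid : ∀ i : Fin len, G.ends (edges i) = s(verts i.castSucc, verts i.succ)

namespace Walk

variable {G : Multigraph V E}

/-- The first vertex of a walk. -/
def start (W : G.Walk) : V := W.verts 0

/-- The last vertex of a walk. -/
def finish (W : G.Walk) : V := W.verts (Fin.last W.len)

/-- A cycle: a closed walk of positive length with pairwise distinct edges and
pairwise distinct vertices (except that the first and last vertex coincide). -/
def IsCycle (W : G.Walk) : Prop :=
  W.start = W.finish ∧ Function.Injective W.edges ∧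
    Function.Injective fun i : Fin W.len => W.verts i.castSucc

/-- An `s`-cycle: a walk with `v₀ = v_l = s`, with `vᵢ ≠ s` for `0 < i < l`,
with no U-turns (`eᵢ ≠ e_{i+1}`), and in which every edge occurs at most
twice. -/
def IsSCycle (W : G.Walk) (s : V) : Prop :=
  W.start = s ∧ W.finish = s ∧
  (∀ i : Fin (W.len + 1), i ≠ 0 → i ≠ Fin.last W.len → W.verts i ≠ s) ∧
  (∀ i j : Fin W.len, (i : ℕ) + 1 = (j : ℕ) → W.edges i ≠ W.edges j) ∧
  (∀ e : E, Nat.card {i : Fin W.len // W.edges i = e} ≤ 2)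

/-- The multiplicity of a vertex `v` in the multiset `V(W)` of vertices of a
walk `W`. -/
noncomputable def vertCount (W : G.Walk) (v : V) : ℕ :=
  Nat.card {i : Fin (W.len + 1) // W.verts i = v}

end Walk

/-- `S` is a feedback vertex set: every cycle of `G` meets `S`
(equivalently, `G − S` contains no cycle). -/
def IsFVS (G : Multigraph V E) (S : Set V) : Prop :=
  ∀ W : G.Walk, W.IsCycle → ∃ i, W.verts i ∈ S

/-- The minimum size of a feedback vertex set. -/
noncomputable def fvs [Fintype V] (G : Multigraph V E) : ℕ :=
  sInf {n : ℕ | ∃ S : Set V, G.IsFVS S ∧ S.ncard = n}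

/-- `x : V → ℝ≥0` is an `s`-cycle cover: `x s = 0` and every `s`-cycle `C`
satisfies `x(V(C)) ≥ 1` (vertices counted with multiplicity). -/
def IsSCycleCover (G : Multigraph V E) (s : V) (x : V → ℝ) : Prop :=
  (∀ v, 0 ≤ x v) ∧ x s = 0 ∧
    ∀ W : G.Walk, W.IsSCycle s → 1 ≤ ∑ i, x (W.verts i)

/-- A function is half-integral if it takes values in `{0, 1/2, 1}`. -/
def HalfIntegral (x : V → ℝ) : Prop := ∀ v, x v = 0 ∨ x v = 1/2 ∨ x v = 1

/-- A minimum `s`-cycle cover. -/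
def IsMinSCycleCover [Fintype V] (G : Multigraph V E) (s : V) (x : V → ℝ) : Prop :=
  G.IsSCycleCover s x ∧ ∀ x' : V → ℝ, G.IsSCycleCover s x' → ∑ v, x v ≤ ∑ v, x' v

/-- An `s`-cycle packing: a nonnegative, finitely supported weighting of the
`s`-cycles such that every vertex `v ≠ s` is used (with multiplicity) with
total weight at most `1`. -/
def IsSCyclePacking (G : Multigraph V E) (s : V) (y : G.Walk →₀ ℝ) : Prop :=
  (∀ W, 0 ≤ y W) ∧ (∀ W, y W ≠ 0 → W.IsSCycle s) ∧
    ∀ v : V, v ≠ s → ∑ W ∈ y.support, (W.vertCount v : ℝ) * y W ≤ 1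

/-- The size of an `s`-cycle packing. -/
noncomputable def packingSize {G : Multigraph V E} (y : G.Walk →₀ ℝ) : ℝ :=
  ∑ W ∈ y.support, y W

/-- Number of edges incident to `v` with `f`-value 1. -/
noncomputable def cnt1 (G : Multigraph V E) (f : E → ℝ) (v : V) : ℕ :=
  Nat.card {e : E // v ∈ G.ends e ∧ f e = 1}

/-- Number of edges incident to `v` with `f`-value 1/2. -/
noncomputable def cntH (G : Multigraph V E) (f : E → ℝ) (v : V) : ℕ :=
  Nat.card {e : E // v ∈ G.ends e ∧ f e = 1/2}

/-- type-O: all incident edges have `f`-value 0. -/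
def IsTypeO (G : Multigraph V E) (f : E → ℝ) (v : V) : Prop :=
  ∀ e : E, v ∈ G.ends e → f e = 0

/-- type-I: exactly two incident edges have value 1 and none has value 1/2. -/
def IsTypeI (G : Multigraph V E) (f : E → ℝ) (v : V) : Prop :=
  G.cnt1 f v = 2 ∧ G.cntH f v = 0

/-- type-H: no incident edge has value 1 and exactly two have value 1/2. -/
def IsTypeH (G : Multigraph V E) (f : E → ℝ) (v : V) : Prop :=
  G.cnt1 f v = 0 ∧ G.cntH f v = 2

/-- type-T: exactly one incident edge has value 1 and exactly two have value 1/2. -/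
def IsTypeT (G : Multigraph V E) (f : E → ℝ) (v : V) : Prop :=
  G.cnt1 f v = 1 ∧ G.cntH f v = 2

/-- A basic `s`-cycle packing: `f : E → {0,1/2,1}` with `f(e) ∈ {0,1}` on edges
incident to `s`, every vertex `v ≠ s` of one of the four types O, I, H, T, and
every cycle consisting of edges of value 1/2 (i.e. every half-integral cycle)
containing an odd number of type-T vertices. -/
def IsBasicSCyclePacking (G : Multigraph V E) (s : V) (f : E → ℝ) : Prop :=
  (∀ e : E, f e = 0 ∨ f e = 1/2 ∨ f e = 1) ∧
  (∀ e : E, s ∈ G.ends e → f e = 0 ∨ f e = 1) ∧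
  (∀ v : V, v ≠ s →
    G.IsTypeO f v ∨ G.IsTypeI f v ∨ G.IsTypeH f v ∨ G.IsTypeT f v) ∧
  (∀ W : G.Walk, W.IsCycle → (∀ j, f (W.edges j) = 1/2) →
    Odd (Nat.card {i : Fin W.len // G.IsTypeT f (W.verts i.castSucc)}))

/-- The size of a basic `s`-cycle packing: `(1/2) · Σ_{e ∈ δ(s)} f(e)`. -/
noncomputable def basicSize [Fintype E] (G : Multigraph V E) (s : V) (f : E → ℝ) : ℝ :=
  (1/2) * ∑ e : E, Set.indicator {e' : E | s ∈ G.ends e'} f e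

/-- `u` and `v` are connected by a walk avoiding the vertex set `S` and the
edge set `F` (or `u = v`). -/
def Reach (G : Multigraph V E) (S : Set V) (F : Set E) (u v : V) : Prop :=
  u = v ∨ ∃ W : G.Walk, (∀ i, W.verts i ∉ S) ∧ (∀ j, W.edges j ∉ F) ∧
    W.start = u ∧ W.finish = v

/-- The edge `e` belongs to the set `B` of the `s`-cycle cover reduction with
respect to the set `X`: `e` joins `s` to some `u ∉ X`, `e` is a bridge of
`G − X` (its endpoints are disconnected in `G − X − e`), and the connected
component of `u` in `G − X − s` is a tree (no cycle of `G − X − s` passes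
through a vertex reachable from `u` in `G − X − s`). -/
def InB (G : Multigraph V E) (s : V) (X : Set V) (e : E) : Prop :=
  ∃ u : V, G.ends e = s(s, u) ∧ u ≠ s ∧ u ∉ X ∧ s ∉ X ∧
    ¬ G.Reach X {e} s u ∧
    ¬ ∃ W : G.Walk, W.IsCycle ∧ (∀ i, W.verts i ∉ X ∪ {s}) ∧
        G.Reach (X ∪ {s}) ∅ u W.start

/-- The graph `G' = (V, E')` obtained from `G` by the `s`-cycle cover
reduction with respect to a half-integral `s`-cycle cover `x`: with
`X = x⁻¹(1)`, insert a double edge (two new parallel edges) between `s` and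
each `v ∈ X`, and delete the edges of `B`. -/
def reduced (G : Multigraph V E) (s : V) (x : V → ℝ) :
    Multigraph V ({e : E // ¬ G.InB s {v : V | x v = 1} e} ⊕ ({v : V // x v = 1} × Bool)) where
  ends := fun e =>
    match e with
    | .inl e' => G.ends e'.val
    | .inr p => s(s, p.1.val)

/-- The graph `G − s` obtained by deleting the vertex `s` and all incident
edges (the vertex `s` is kept as an isolated vertex). -/
def deleteVertex (G : Multigraph V E) (s : V) :
    Multigraph V {e : E // s ∉ G.ends e} where
  ends := fun e => G.ends e.val

/-- An `f`-augmenting walk for a basic `s`-cycle packing `f`: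
(1) it starts at `s`; (2) its first edge has value 0; (3) its edges are
pairwise distinct; (4) its vertices `v₀,…,v_{l-1}` are pairwise distinct;
(5) each interior vertex `vᵢ` (`1 ≤ i ≤ l-1`) is type-O, or type-I with
`f(e) = 1` for at least one of `e ∈ {eᵢ, e_{i+1}}`; (6) if the last vertex
`v_l` equals `vᵢ` for some `i < l` then: `v_l = s` and `f(e_l) = 0`, or `v_l`
is type-O, or `v_l` is type-I and `f(e) = 1` for at least one of
`e ∈ {eᵢ, e_l}`; (7) if `v_l` is a new vertex then it is type-H or type-T. -/
def IsAugmentingWalk (G : Multigraph V E) (s : V) (f : E → ℝ) (W : G.Walk) : Prop :=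
  W.start = s ∧
  f (W.edges ⟨0, W.len_pos⟩) = 0 ∧
  Function.Injective W.edges ∧
  Function.Injective (fun i : Fin W.len => W.verts i.castSucc) ∧
  (∀ i : Fin W.len, 0 < i.val →
    (G.IsTypeO f (W.verts i.castSucc) ∨
      (G.IsTypeI f (W.verts i.castSucc) ∧
        (f (W.edges ⟨i.val - 1, Nat.lt_of_le_of_lt (Nat.sub_le _ _) i.isLt⟩) = 1 ∨
          f (W.edges i) = 1)))) ∧
  (∀ i : Fin W.len, W.finish = W.verts i.castSucc →
    ((W.finish = s ∧ f (W.edges ⟨W.len - 1, Nat.sub_lt W.len_pos Nat.one_pos⟩) = 0) ∨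
     (W.finish ≠ s ∧ G.IsTypeO f W.finish) ∨
     (W.finish ≠ s ∧ G.IsTypeI f W.finish ∧
       (f (W.edges ⟨i.val - 1, Nat.lt_of_le_of_lt (Nat.sub_le _ _) i.isLt⟩) = 1 ∨
         f (W.edges ⟨W.len - 1, Nat.sub_lt W.len_pos Nat.one_pos⟩) = 1)))) ∧
  ((∀ i : Fin W.len, W.finish ≠ W.verts i.castSucc) →
    (G.IsTypeH f W.finish ∨ G.IsTypeT f W.finish))

/-- `g = f_W` is obtained from `f` by augmenting along the walk `W`.
If `v_l = s` (so `h = l`), the values of `f` on `e₁,…,e_l` are flipped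
(`f ↦ 1 − f`).  If `v_l ≠ s` equals an earlier vertex `vᵢ` (so `h = i`), the
values on `e₁,…,e_h` are flipped and the values on `e_{h+1},…,e_l` are set to
`1/2`.  If `v_l ≠ s` is a new vertex (type-H or type-T, with `h = l`), the
values on `e₁,…,e_l` are flipped and, on the half-integral cycle `C` of `v_l`
(traversed from `t₀ = v_l` in either direction), the edges of the segment
`Pᵢ` between consecutive markers `tᵢ, t_{i+1}` (the markers being `v_l`
together with the type-T vertices of `C`) receive value `0` for even `i` and
`1` for odd `i`; the segment index of an edge is the number of type-T
vertices strictly preceding it along the traversal.  All other edges keep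
their `f`-value. -/
def AugmentedAlong (G : Multigraph V E) (s : V) (f : E → ℝ) (W : G.Walk) (g : E → ℝ) : Prop :=
  -- Case A : the walk returns to `s`.
  (W.finish = s ∧
    (∀ j : Fin W.len, g (W.edges j) = 1 - f (W.edges j)) ∧
    (∀ e : E, (∀ j, e ≠ W.edges j) → g e = f e)) ∨
  -- Case B : the last vertex is a repeated vertex `vᵢ ≠ s` (type-O or type-I).
  (W.finish ≠ s ∧
    (∃ i : Fin W.len, W.finish = W.verts i.castSucc ∧
      (∀ j : Fin W.len, j.val < i.val → g (W.edges j) = 1 - f (W.edges j)) ∧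
      (∀ j : Fin W.len, i.val ≤ j.val → g (W.edges j) = 1/2) ∧
      (∀ e : E, (∀ j, e ≠ W.edges j) → g e = f e))) ∨
  -- Case C : the last vertex is a new vertex of type-H or type-T.
  (W.finish ≠ s ∧ (∀ i : Fin W.len, W.finish ≠ W.verts i.castSucc) ∧
    (∃ C : G.Walk, C.IsCycle ∧ C.verts 0 = W.finish ∧
      (∀ j, f (C.edges j) = 1/2) ∧
      (∀ j : Fin W.len, g (W.edges j) = 1 - f (W.edges j)) ∧
      (∀ j : Fin C.len,
        g (C.edges j) =
          if Even (Nat.card {m : Fin C.len //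
              1 ≤ m.val ∧ m.val ≤ j.val ∧ G.IsTypeT f (C.verts m.castSucc)})
          then 0 else 1) ∧
      (∀ e : E, (∀ j, e ≠ W.edges j) → (∀ j, e ≠ C.edges j) → g e = f e)))


end Multigraph

section Preliminaries

open scoped Matrix Topology
open Finset

theorem exists_eq_append_of_not_nodup {α : Type*} {l : List α} (hl : ¬ l.Nodup) :
    ∃ a p m r, l = p ++ a :: (m ++ a :: r) := by
  obtain ⟨a, ha⟩ := List.exists_duplicate_iff_not_nodup.2 hl
  obtain ⟨l₁, l₂, rfl, ha₁, ha₂⟩ := List.cons_sublist_iff.1 (List.duplicate_iff_sublist.1 ha)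
  obtain ⟨p, q, rfl⟩ := List.mem_iff_append.1 ha₁
  obtain ⟨q', r, rfl⟩ := List.mem_iff_append.1 (List.singleton_sublist.1 ha₂)
  exact ⟨a, p, q ++ q', r, by simp⟩

/-! ### Linear programs and extreme points -/

section LinearProgramming

variable {I J : Type*} [Fintype I] [Fintype J]

theorem exists_isSaddlePointOn_stdSimplex [Nonempty I] [Nonempty J] (A : Matrix I J ℝ) :
    ∃ q ∈ stdSimplex ℝ J, ∃ p ∈ stdSimplex ℝ I,
      IsSaddlePointOn (stdSimplex ℝ J) (stdSimplex ℝ I) (fun q p => p ⬝ᵥ A *ᵥ q) q p := by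
  classical
  refine Sion.exists_isSaddlePointOn ⟨_, single_mem_stdSimplex ℝ (Classical.arbitrary J)⟩
    (convex_stdSimplex ℝ J) (isCompact_stdSimplex ℝ J) (fun p _ => ?_) (fun p _ => ?_)
    (convex_stdSimplex ℝ I) ⟨_, single_mem_stdSimplex ℝ (Classical.arbitrary I)⟩
    (isCompact_stdSimplex ℝ I) (fun q _ => ?_) (fun q _ => ?_)
  · exact Continuous.continuousOn (by fun_prop) |>.lowerSemicontinuousOn
  · exact (((dotProductBilin ℝ ℝ p).comp A.mulVecLin).convexOn
      (convex_stdSimplex ℝ J)).quasiconvexOn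
  · exact Continuous.continuousOn (by fun_prop) |>.upperSemicontinuousOn
  · exact (((dotProductBilin ℝ ℝ).flip (A *ᵥ q)).concaveOn
      (convex_stdSimplex ℝ I)).quasiconcaveOn

theorem exists_cover_packing_sum_eq {A : Matrix I J ℝ} (hA : ∀ i j, 0 ≤ A i j)
    (hcol : ∀ j, ∃ i, 0 < A i j) :
    ∃ (x : I → ℝ) (y : J → ℝ), 0 ≤ x ∧ 0 ≤ y ∧ (∀ j, 1 ≤ (x ᵥ* A) j) ∧
      (∀ i, (A *ᵥ y) i ≤ 1) ∧ ∑ i, x i = ∑ j, y j := by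
  classical
  rcases isEmpty_or_nonempty J with hJ | ⟨⟨j₀⟩⟩
  · exact ⟨0, 0, le_rfl, le_rfl, isEmptyElim, by simp, by simp⟩
  have : Nonempty J := ⟨j₀⟩
  have : Nonempty I := ⟨(hcol j₀).choose⟩
  obtain ⟨q, hq, p, hp, hsaddle⟩ := exists_isSaddlePointOn_stdSimplex A
  set value := p ⬝ᵥ A *ᵥ q
  have hrow (i : I) : (A *ᵥ q) i ≤ value := by
    simpa using hsaddle q hq _ (single_mem_stdSimplex ℝ i)
  have hcolumn (j : J) : value ≤ (p ᵥ* A) j :=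
    (hsaddle _ (single_mem_stdSimplex ℝ j) p hp).trans_eq (by
      simp only [Matrix.dotProduct_mulVec, dotProduct_single_one])
  have hvalue : 0 < value := by
    obtain ⟨j, -, hj⟩ := exists_ne_zero_of_sum_ne_zero (hq.2.trans_ne one_ne_zero)
    obtain ⟨i, hi⟩ := hcol j
    refine lt_of_lt_of_le ?_ (hrow i)
    exact sum_pos' (fun j _ => mul_nonneg (hA i j) (hq.1 j))
      ⟨j, mem_univ j, mul_pos hi ((hq.1 j).lt_of_ne' hj)⟩
  refine ⟨value⁻¹ • p, value⁻¹ • q, smul_nonneg (inv_nonneg.2 hvalue.le) hp.1,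
    smul_nonneg (inv_nonneg.2 hvalue.le) hq.1, fun j => ?_, fun i => ?_, ?_⟩
  · rw [Matrix.smul_vecMul]
    exact (one_le_inv_mul₀ hvalue).2 (hcolumn j)
  · rw [Matrix.mulVec_smul]
    exact (inv_mul_le_one₀ hvalue).2 (hrow i)
  · simp only [Pi.smul_apply, ← smul_sum, hp.2, hq.2]

variable {A : Matrix I J ℝ} {x : I → ℝ} {y : J → ℝ}

theorem mulVec_eq_one_of_sum_eq (hx : 0 ≤ x) (hy : 0 ≤ y) (hcover : ∀ j, 1 ≤ (x ᵥ* A) j)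
    (hpacking : ∀ i, (A *ᵥ y) i ≤ 1) (hsum : ∑ i, x i = ∑ j, y j) {i : I} (hi : x i ≠ 0) :
    (A *ᵥ y) i = 1 := by
  have hle (i : I) (_ : i ∈ univ) : x i * (A *ᵥ y) i ≤ x i :=
    mul_le_of_le_one_right (hx i) (hpacking i)
  have hge : ∑ i, x i ≤ ∑ i, x i * (A *ᵥ y) i := calc
    ∑ i, x i = ∑ j, y j := hsum
    _ ≤ ∑ j, (x ᵥ* A) j * y j :=
      sum_le_sum fun j _ => le_mul_of_one_le_left (hy j) (hcover j)
    _ = ∑ i, x i * (A *ᵥ y) i := (Matrix.dotProduct_mulVec x A y).symm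
  exact mul_eq_left₀ hi |>.1 ((sum_eq_sum_iff_of_le hle).1 (hge.antisymm' (sum_le_sum hle)) i
    (mem_univ i))

theorem vecMul_eq_one_of_sum_eq (hx : 0 ≤ x) (hy : 0 ≤ y) (hcover : ∀ j, 1 ≤ (x ᵥ* A) j)
    (hpacking : ∀ i, (A *ᵥ y) i ≤ 1) (hsum : ∑ i, x i = ∑ j, y j) {j : J} (hj : y j ≠ 0) :
    (x ᵥ* A) j = 1 := by
  have hge (j : J) (_ : j ∈ univ) : y j ≤ (x ᵥ* A) j * y j :=
    le_mul_of_one_le_left (hy j) (hcover j)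
  have hle : ∑ j, (x ᵥ* A) j * y j ≤ ∑ j, y j := calc
    ∑ j, (x ᵥ* A) j * y j = ∑ i, x i * (A *ᵥ y) i := (Matrix.dotProduct_mulVec x A y).symm
    _ ≤ ∑ i, x i := sum_le_sum fun i _ => mul_le_of_le_one_right (hx i) (hpacking i)
    _ = ∑ j, y j := hsum
  exact mul_eq_right₀ hj |>.1 ((sum_eq_sum_iff_of_le hge).1 (hle.antisymm' (sum_le_sum hge)) j
    (mem_univ j)).symm

end LinearProgramming

theorem exists_mem_extremePoints_forall_le {M : Type*} [AddCommGroup M] [Module ℝ M]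
    [TopologicalSpace M] [T2Space M] [IsTopologicalAddGroup M] [ContinuousSMul ℝ M]
    [LocallyConvexSpace ℝ M] {K : Set M} (hK : IsCompact K) (hne : K.Nonempty) (l : M →L[ℝ] ℝ) :
    ∃ x ∈ K.extremePoints ℝ, ∀ y ∈ K, l y ≤ l x := by
  have hface : IsExposed ℝ K (l.toExposed K) := ContinuousLinearMap.toExposed.isExposed
  obtain ⟨m, hm, hmax⟩ := hK.exists_isMaxOn hne l.continuous.continuousOn
  obtain ⟨x, hx⟩ := (hface.isCompact hK).extremePoints_nonempty ⟨m, hm, hmax⟩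
  exact ⟨x, hface.isExtreme.extremePoints_subset_extremePoints hx, hx.1.2⟩

theorem eq_zero_of_mem_extremePoints_of_eventually {M : Type*} [AddCommGroup M] [Module ℝ M]
    {K : Set M} {x d : M} (hx : x ∈ K.extremePoints ℝ)
    (hd : ∀ᶠ t : ℝ in 𝓝 0, x + t • d ∈ K) : d = 0 := by
  have hneg : ∀ᶠ t : ℝ in 𝓝 0, x + (-t) • d ∈ K :=
    (continuous_neg.tendsto' (0 : ℝ) 0 neg_zero).eventually hd
  obtain ⟨t, ⟨hplus, hminus⟩, ht⟩ := (((hd.and hneg).filter_mono nhdsWithin_le_nhds).and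
    (self_mem_nhdsWithin (s := Set.Ioi 0))).exists
  have hmid : x ∈ openSegment ℝ (x + t • d) (x + (-t) • d) :=
    ⟨1 / 2, 1 / 2, by norm_num, by norm_num, by norm_num, by module⟩
  have := (mem_extremePoints_iff_left.1 hx).2 _ hplus _ hminus hmid
  simpa [ht.ne'] using this

theorem eventually_nonneg_add_mul {a b : ℝ} (ha : 0 ≤ a) (hab : a = 0 → b = 0) :
    ∀ᶠ t : ℝ in 𝓝 0, 0 ≤ a + t * b := by
  rcases ha.eq_or_lt with h | h
  · simp [← h, hab h.symm]
  · have hlim : Filter.Tendsto (fun t : ℝ => a + t * b) (𝓝 0) (𝓝 a) :=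
      Continuous.tendsto' (by fun_prop) _ _ (by simp)
    exact (hlim.eventually (lt_mem_nhds h)).mono fun _ => le_of_lt

theorem card_le_card_of_forall_eq_zero {K ι κ : Type*} [Field K]
    (L : κ → (ι → K) →ₗ[K] K) {F : Finset ι} {T : Finset κ}
    (h : ∀ d : ι → K, (∀ i ∉ F, d i = 0) → (∀ k ∈ T, L k d = 0) → d = 0) : #F ≤ #T := by
  let extend := Function.ExtendByZero.linearMap K ((↑) : F → ι)
  have hextend (d : F → K) (i : F) : extend d i = d i := Subtype.val_injective.extend_apply ..
  let Φ : (F → K) →ₗ[K] (T → K) := LinearMap.pi fun k => L k ∘ₗ extend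
  have hΦ : Function.Injective Φ := by
    refine (injective_iff_map_eq_zero Φ).2 fun d hd => funext fun i => ?_
    have hzero : extend d = 0 := by
      refine h _ (fun j hj => ?_) fun k hk => congrFun hd ⟨k, hk⟩
      exact Function.extend_apply' _ _ _ fun ⟨i, hi⟩ => hj (hi ▸ i.2)
    exact (hextend d i).symm.trans (congrFun hzero i)
  simpa using LinearMap.finrank_le_finrank_of_injective hΦ

theorem ne_intCast_of_mem_Ioo {r : ℝ} (hr : r ∈ Set.Ioo 0 1) (n : ℤ) : r ≠ n := by
  rintro rfl
  have h₀ : (0 : ℤ) < n := by exact_mod_cast hr.1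
  have h₁ : n < (1 : ℤ) := by exact_mod_cast hr.2
  omega

/-! ### Involutions -/

section Involutions

variable {α β : Type*}

-- Sort by `c` and pair the elements at distance `k`: if `c` agreed on a pair, it would be constant
-- on the `k + 1` elements from one to the other.
theorem exists_involutive_forall_ne [Finite α] (c : α → β) {k : ℕ} (hcard : Nat.card α = k + k)
    (hc : ∀ b, (c ⁻¹' {b}).ncard ≤ k) :
    ∃ σ : α → α, Function.Involutive σ ∧ ∀ a, c (σ a) ≠ c a := by
  classical
  let _ : LinearOrder β := linearOrderOfSTO WellOrderingRel
  let e₀ : Fin (k + k) ≃ α := (Finite.equivFinOfCardEq hcard).symm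
  let e : Fin (k + k) ≃ α := (Tuple.sort (c ∘ e₀)).trans e₀
  have hmono : Monotone (c ∘ e) := Tuple.monotone_sort (c ∘ e₀)
  have hne (i : Fin k) : c (e (i.castAdd k)) ≠ c (e (i.natAdd k)) := by
    intro h
    have hsub : e '' Icc (i.castAdd k) (i.natAdd k) ⊆ c ⁻¹' {c (e (i.castAdd k))} := by
      rintro _ ⟨j, hj, rfl⟩
      obtain ⟨hij, hji⟩ := mem_Icc.1 hj
      exact ((hmono hji).trans_eq h.symm).antisymm (hmono hij)
    have := (Set.ncard_le_ncard hsub).trans (hc _)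
    rw [Set.ncard_image_of_injective _ e.injective, Set.ncard_coe_finset, Fin.card_Icc,
      Fin.val_natAdd, Fin.val_castAdd] at this
    omega
  let r : Fin k ⊕ Fin k ≃ α := finSumFinEquiv.trans e
  refine ⟨fun a => r (r.symm a).swap, fun a => by simp, fun a => ?_⟩
  obtain ⟨i, rfl⟩ := r.surjective a
  beta_reduce
  rw [r.symm_apply_apply]
  rcases i with i | i
  exacts [(hne i).symm, hne i]

theorem exists_transversal_of_involutive [Fintype α] {σ : α → α} (hσ : Function.Involutive σ)
    (hne : ∀ a, σ a ≠ a) : ∃ T : Finset α, Fintype.card α = 2 * #T ∧ ∀ a ∈ T, σ a ∉ T := by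
  classical
  let r := Fintype.equivFin α
  let T : Finset α := {a | r a < r (σ a)}
  have hmem (a : α) : a ∈ T ↔ r a < r (σ a) := mem_filter_univ a
  have hflip (a : α) : σ a ∈ T ↔ a ∉ T := by
    have : r (σ a) ≠ r a := fun h => hne a (r.injective h)
    rw [hmem, hmem, hσ a, not_lt, this.le_iff_lt]
  have hcompl : T.map hσ.toPerm.toEmbedding = Tᶜ := by
    ext a
    rw [mem_map_equiv, mem_compl, ← hflip]
    rfl
  refine ⟨T, ?_, fun a ha => by simpa [hflip] using ha⟩
  rw [← card_add_card_compl T, ← hcompl, card_map, two_mul]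

theorem two_mul_card_le_of_injective [Finite β] {g h : α → β} (hg : Function.Injective g)
    (hh : Function.Injective h) (hgh : ∀ a b, g a ≠ h b) : 2 * Nat.card α ≤ Nat.card β := by
  have := Finite.of_injective g hg
  rw [two_mul, ← Nat.card_sum]
  exact Nat.card_le_card_of_injective _ (hg.sumElim hh hgh)

end Involutions

end Preliminaries

namespace Multigraph

open scoped Matrix Topology
open Finset

variable {V E : Type} {G : Multigraph V E}

/-! ### Rounding covers along their zero region -/

/-- An edge traversed in one of its directions. -/
@[ext]
structure Dart (G : Multigraph V E) where
  src : V
  edge : E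
  dst : V
  ends_eq : G.ends edge = s(src, dst)

namespace Dart

/-- The same edge traversed in the opposite direction. -/
def symm (d : G.Dart) : G.Dart := ⟨d.dst, d.edge, d.src, d.ends_eq.trans Sym2.eq_swap⟩

theorem eq_or_eq_symm {d d' : G.Dart} (h : d.edge = d'.edge) : d = d' ∨ d = d'.symm := by
  have hends : s(d.src, d.dst) = s(d'.src, d'.dst) := by rw [← d.ends_eq, ← d'.ends_eq, h]
  rcases Sym2.eq_iff.1 hends with ⟨hsrc, hdst⟩ | ⟨hsrc, hdst⟩
  · exact .inl (Dart.ext hsrc h hdst)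
  · exact .inr (Dart.ext hsrc h hdst)

end Dart

/-- The darts of `l` are traversed consecutively and lead from `a` to `b`; the list may be empty. -/
def IsDartWalk : V → List G.Dart → V → Prop
  | a, [], b => a = b
  | a, d :: l, b => d.src = a ∧ IsDartWalk d.dst l b

/-- No edge of the list is followed immediately by itself. -/
def NonBacktracking (l : List G.Dart) : Prop := l.IsChain fun d d' => d.edge ≠ d'.edge

/-- The weight of the vertices entered by a list of darts; the initial vertex does not count. -/
def weight (x : V → ℝ) (l : List G.Dart) : ℝ := (l.map fun d => x d.dst).sum

theorem isDartWalk_append {a b : V} {l₁ l₂ : List G.Dart} :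
    IsDartWalk a (l₁ ++ l₂) b ↔ ∃ c, IsDartWalk a l₁ c ∧ IsDartWalk c l₂ b := by
  induction l₁ generalizing a with
  | nil => simp [IsDartWalk]
  | cons d l ih => simp [IsDartWalk, ih, and_assoc]

theorem IsDartWalk.reverse {a b : V} {l : List G.Dart} (h : IsDartWalk a l b) :
    IsDartWalk b (l.reverse.map Dart.symm) a := by
  induction l generalizing a with
  | nil => exact h.symm
  | cons d l ih =>
    rw [List.reverse_cons, List.map_append, isDartWalk_append]
    exact ⟨d.dst, ih h.2, rfl, h.1⟩

theorem IsDartWalk.take {a b : V} {l : List G.Dart} (h : IsDartWalk a l b) {i : ℕ}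
    (hi : i < l.length) : IsDartWalk a (l.take (i + 1)) l[i].dst := by
  induction l generalizing a i with
  | nil => simp at hi
  | cons d l ih =>
    cases i with
    | zero => exact ⟨h.1, rfl⟩
    | succ i => exact ⟨h.1, ih h.2 (by simpa using hi)⟩

theorem isDartWalk_iff_getElem {a b : V} {l : List G.Dart} :
    IsDartWalk a l b ↔
      (∀ i (hi : i < l.length), (a :: l.map Dart.dst)[i]'(by simp; omega) = l[i].src) ∧
        (a :: l.map Dart.dst)[l.length]'(by simp) = b := by
  induction l generalizing a with
  | nil => simp [IsDartWalk]
  | cons d l ih =>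
    simp only [IsDartWalk, ih, List.length_cons, List.map_cons, List.getElem_cons_succ]
    rw [← and_assoc]
    refine and_congr_left fun _ => ⟨fun ⟨h₀, h⟩ i hi => ?_, fun h => ⟨(h 0 (by simp)).symm, ?_⟩⟩
    · cases i with
      | zero => exact h₀.symm
      | succ i => exact h i (by omega)
    · exact fun i hi => h (i + 1) (by omega)

theorem NonBacktracking.reverse {l : List G.Dart} (h : NonBacktracking l) :
    NonBacktracking (l.reverse.map Dart.symm) := by
  rw [NonBacktracking, List.isChain_map, List.isChain_reverse]
  exact h.imp fun _ _ => Ne.symm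

section Weight

variable {x : V → ℝ}

theorem weight_append (x : V → ℝ) (l₁ l₂ : List G.Dart) :
    weight x (l₁ ++ l₂) = weight x l₁ + weight x l₂ := by
  simp only [weight, List.map_append, List.sum_append]

theorem weight_eq_zero {l : List G.Dart} (h : ∀ d ∈ l, x d.dst = 0) : weight x l = 0 :=
  List.sum_eq_zero (by simpa using h)

theorem weight_mono (hx : ∀ v, 0 ≤ x v) {l₁ l₂ : List G.Dart} (h : l₁.Sublist l₂) :
    weight x l₁ ≤ weight x l₂ :=
  (h.map _).sum_le_sum (by simp [hx])

end Weight

/-- The walk which starts at `a` and traverses the darts of a nonempty list. -/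
def walkOfDarts {a b : V} {l : List G.Dart} (hne : l ≠ []) (h : IsDartWalk a l b) : G.Walk where
  len := l.length
  len_pos := List.length_pos_iff.2 hne
  verts i := (a :: l.map Dart.dst)[i]'(by simpa using Fin.is_le i)
  edges i := l[i].edge
  valid i := by
    have hsrc := (isDartWalk_iff_getElem.1 h).1 i i.2
    simpa [hsrc] using l[i].ends_eq

theorem walkOfDarts_verts_succ {a b : V} {l : List G.Dart} (hne : l ≠ []) (h : IsDartWalk a l b)
    (i : Fin l.length) : (walkOfDarts hne h).verts i.succ = l[i].dst :=
  List.getElem_map ..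

theorem sum_verts_walkOfDarts {a b : V} {l : List G.Dart} (hne : l ≠ []) (h : IsDartWalk a l b)
    (x : V → ℝ) : ∑ i, x ((walkOfDarts hne h).verts i) = x a + weight x l := by
  refine (Fin.sum_univ_succ _).trans (congrArg (x a + ·) ?_)
  rw [weight, ← Fin.sum_univ_fun_getElem l fun d => x d.dst]
  exact sum_congr rfl fun i _ => congrArg x (walkOfDarts_verts_succ hne h i)

/-- A nonempty list of darts leading from `s` to `s` without U-turns. Unlike an `s`-cycle it may
visit `s` in between and repeat edges arbitrarily often. -/
structure IsClosedDartWalk (s : V) (l : List G.Dart) : Prop where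
  ne_nil : l ≠ []
  isDartWalk : IsDartWalk s l s
  nonBacktracking : NonBacktracking l

theorem card_edge_eq_le_two {l : List G.Dart} (hnodup : l.Nodup) (e : E) :
    Nat.card {i : Fin l.length // l[i].edge = e} ≤ 2 := by
  classical
  by_cases hempty : ∃ i : Fin l.length, l[i].edge = e
  · obtain ⟨i₀, rfl⟩ := hempty
    let φ (i : {i : Fin l.length // l[i].edge = l[i₀].edge}) :
        ({l[i₀], l[i₀].symm} : Finset G.Dart) :=
      ⟨l[i.1], by simpa using Dart.eq_or_eq_symm i.2⟩
    have hφ : φ.Injective := fun i j hij =>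
      Subtype.ext (List.nodup_iff_injective_get.1 hnodup (congrArg Subtype.val hij))
    exact (Nat.card_le_card_of_injective φ hφ).trans
      ((Nat.card_eq_card_toFinset _).trans_le (by simpa using card_le_two))
  · have : IsEmpty {i : Fin l.length // l[i].edge = e} := ⟨fun i => hempty ⟨i.1, i.2⟩⟩
    simp

theorem IsClosedDartWalk.isSCycle {s : V} {l : List G.Dart} (h : IsClosedDartWalk s l)
    (hinner : ∀ i (hi : i + 1 < l.length), l[i].dst ≠ s) (hnodup : l.Nodup) :
    (walkOfDarts h.ne_nil h.isDartWalk).IsSCycle s := by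
  refine ⟨rfl, (isDartWalk_iff_getElem.1 h.isDartWalk).2, fun i hi₀ hi => ?_, fun i j hij => ?_,
    fun e => ?_⟩
  · obtain ⟨j, rfl⟩ := Fin.exists_succ_eq.2 hi₀
    have : (j : ℕ) + 1 ≠ l.length := fun hj => hi (Fin.ext hj)
    have hj : (j : ℕ) < l.length := j.2
    exact walkOfDarts_verts_succ h.ne_nil h.isDartWalk j ▸ hinner j (by omega)
  · have hj : (j : ℕ) < l.length := j.2
    simpa [walkOfDarts, ← hij] using List.isChain_iff_getElem.1 h.nonBacktracking i (by omega)
  · exact card_edge_eq_le_two hnodup e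

theorem IsClosedDartWalk.exists_shorter_of_dst_eq {s : V} {l : List G.Dart}
    (h : IsClosedDartWalk s l) {i : ℕ} (hi : i + 1 < l.length) (his : l[i].dst = s) :
    ∃ l', IsClosedDartWalk s l' ∧ l'.Sublist l ∧ l'.length < l.length :=
  ⟨l.take (i + 1), ⟨by simp [h.ne_nil], his ▸ h.isDartWalk.take (by omega),
    h.nonBacktracking.take _⟩, List.take_sublist _ _, by simpa using hi⟩

theorem IsClosedDartWalk.exists_shorter_of_not_nodup {s : V} {l : List G.Dart}
    (h : IsClosedDartWalk s l) (hl : ¬ l.Nodup) :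
    ∃ l', IsClosedDartWalk s l' ∧ l'.Sublist l ∧ l'.length < l.length := by
  obtain ⟨d, p, m, r, rfl⟩ := exists_eq_append_of_not_nodup hl
  obtain ⟨c, hp, hc, hm⟩ := isDartWalk_append.1 h.isDartWalk
  obtain ⟨-, -, -, hr⟩ := isDartWalk_append.1 hm
  obtain ⟨hpd, hmr⟩ := List.isChain_split.1 h.nonBacktracking
  refine ⟨p ++ d :: r, ⟨by simp, isDartWalk_append.2 ⟨c, hp, hc, hr⟩, ?_⟩, ?_, ?_⟩
  · exact List.isChain_split.2 ⟨hpd, (List.isChain_split (l₁ := d :: m).1 hmr).2⟩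
  · exact (List.sublist_append_right (m ++ [d]) r |>.cons_cons d |>.append_left p).trans (by simp)
  · simp

theorem IsSCycleCover.one_le_weight {s : V} {x : V → ℝ} (hx : G.IsSCycleCover s x)
    {l : List G.Dart} (h : IsClosedDartWalk s l) : 1 ≤ weight x l := by
  induction hn : l.length using Nat.strong_induction_on generalizing l with | _ n ih
  have hshorter : (∃ l', IsClosedDartWalk s l' ∧ l'.Sublist l ∧ l'.length < l.length) →
      1 ≤ weight x l := fun ⟨l', hl', hsub, hlt⟩ =>
    (ih _ (hn ▸ hlt) hl' rfl).trans (weight_mono hx.1 hsub)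
  by_cases hinner : ∃ i, ∃ hi : i + 1 < l.length, l[i].dst = s
  · obtain ⟨i, hi, his⟩ := hinner
    exact hshorter (h.exists_shorter_of_dst_eq hi his)
  by_cases hnodup : l.Nodup
  · have hcover := hx.2.2 _ (h.isSCycle (fun i hi his => hinner ⟨i, hi, his⟩) hnodup)
    rwa [sum_verts_walkOfDarts, hx.2.1, zero_add] at hcover
  · exact hshorter (h.exists_shorter_of_not_nodup hnodup)

namespace Walk

/-- The darts traversed by a walk, in order. -/
def darts (W : G.Walk) : List G.Dart :=
  List.ofFn fun i => ⟨W.verts i.castSucc, W.edges i, W.verts i.succ, W.valid i⟩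

theorem isDartWalk_darts (W : G.Walk) : IsDartWalk W.start W.darts W.finish := by
  rw [isDartWalk_iff_getElem]
  refine ⟨fun i hi => ?_, ?_⟩
  · cases i with
    | zero => simp [darts, start]
    | succ i => simp [darts]
  · obtain ⟨len, len_pos, verts, edges, valid⟩ := W
    obtain ⟨n, rfl⟩ := Nat.exists_eq_succ_of_ne_zero len_pos.ne'
    simp [darts, finish, Fin.last, -List.ofFn_succ]

/-- The walk traversed backwards. -/
def reverse (W : G.Walk) : G.Walk where
  len := W.len
  len_pos := W.len_pos
  verts := W.verts ∘ Fin.rev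
  edges := W.edges ∘ Fin.rev
  valid i := by
    simp only [Function.comp_apply, Fin.rev_castSucc, Fin.rev_succ, W.valid, Sym2.eq_swap]

theorem IsSCycle.reverse {W : G.Walk} {s : V} (h : W.IsSCycle s) : W.reverse.IsSCycle s := by
  obtain ⟨hstart, hfinish, hinner, hturn, hcard⟩ := h
  refine ⟨?_, ?_, fun i hi₀ hi => ?_, fun i j hij => ?_, fun e => ?_⟩
  · exact (congrArg W.verts (Fin.rev_zero _)).trans hfinish
  · exact (congrArg W.verts (Fin.rev_last _)).trans hstart
  · exact hinner _ (fun h => hi (Fin.rev_eq_iff.1 h)) (fun h => hi₀ (Fin.rev_injective h))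
  · have : (i : ℕ) < W.len := i.2
    have : (j : ℕ) < W.len := j.2
    exact (hturn (Fin.rev (n := W.len) j) (Fin.rev (n := W.len) i)
      (show W.len - (j + 1) + 1 = W.len - (i + 1) by omega)).symm
  · exact (Nat.card_congr (Fin.revPerm.subtypeEquiv fun _ => Iff.rfl)).trans_le (hcard e)

theorem IsSCycle.nonBacktracking_darts {W : G.Walk} {s : V} (h : W.IsSCycle s) :
    NonBacktracking W.darts :=
  List.isChain_iff_getElem.2 fun i hi => by
    simpa [darts] using h.2.2.2.1 ⟨i, by simp [darts] at hi; omega⟩ ⟨i + 1, _⟩ rfl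

end Walk

section ZeroRegion

variable {s : V} {x : V → ℝ}

/-- The vertices of weight zero that are joined to `s` by a walk without U-turns through
vertices of weight zero. -/
def zeroRegion (G : Multigraph V E) (s : V) (x : V → ℝ) : Set V :=
  {r | x r = 0 ∧ ∃ q : List G.Dart, IsDartWalk r q s ∧ NonBacktracking q ∧
    ∀ d ∈ q, x d.src = 0 ∧ x d.dst = 0}

/-- The edges at `v` that lead into the zero region; there are none if `v` itself lies in it. -/
def boundaryEdges (G : Multigraph V E) (s : V) (x : V → ℝ) (v : V) : Set E :=
  {g | v ∉ G.zeroRegion s x ∧ ∃ r ∈ G.zeroRegion s x, G.ends g = s(v, r)}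

theorem self_mem_zeroRegion (hs : x s = 0) : s ∈ G.zeroRegion s x :=
  ⟨hs, [], rfl, .nil, by simp⟩

theorem mem_zeroRegion_of_ends_eq {r w : V} {g : E} (hr : r ∈ G.zeroRegion s x) (hw : x w = 0)
    (hg : G.ends g = s(w, r)) : w ∈ G.zeroRegion s x := by
  obtain ⟨hxr, q, hwalk, hback, hzero⟩ := id hr
  refine ⟨hw, ?_⟩
  let b : G.Dart := ⟨w, g, r, hg⟩
  cases q with
  | nil => exact ⟨[b], ⟨rfl, hwalk⟩, .singleton b, by simp [b, hw, hxr]⟩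
  | cons d q =>
    by_cases hd : d.edge = g
    · rcases Dart.eq_or_eq_symm (d' := b) hd with rfl | rfl
      · obtain rfl : w = r := hwalk.1
        exact hr.2
      · exact ⟨q, hwalk.2, hback.tail, fun d hd => hzero d (List.mem_cons_of_mem _ hd)⟩
    · refine ⟨b :: d :: q, ⟨rfl, hwalk⟩, List.isChain_cons_cons.2 ⟨Ne.symm hd, hback⟩, ?_⟩
      exact List.forall_mem_cons.2 ⟨⟨hw, hxr⟩, hzero⟩

theorem pos_of_mem_boundaryEdges (hx : ∀ v, 0 ≤ x v) {v : V} {g : E}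
    (hg : g ∈ G.boundaryEdges s x v) : 0 < x v := by
  obtain ⟨hv, r, hr, hends⟩ := hg
  exact (hx v).lt_of_ne' fun hzero => hv (mem_zeroRegion_of_ends_eq hr hzero hends)

theorem exists_isDartWalk_of_mem_boundaryEdges (hx : ∀ v, 0 ≤ x v) {v : V} {g : E}
    (hg : g ∈ G.boundaryEdges s x v) :
    ∃ (d : G.Dart) (q : List G.Dart), d.edge = g ∧ IsDartWalk v (d :: q) s ∧
      NonBacktracking (d :: q) ∧ x d.dst = 0 ∧ ∀ d' ∈ q, x d'.src = 0 ∧ x d'.dst = 0 := by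
  have hpos := pos_of_mem_boundaryEdges hx hg
  obtain ⟨-, r, ⟨hxr, q, hwalk, hback, hzero⟩, hends⟩ := hg
  refine ⟨⟨v, g, r, hends⟩, q, rfl, ⟨rfl, hwalk⟩, List.isChain_cons.2 ⟨?_, hback⟩, hxr, hzero⟩
  intro d' hd' hedge
  obtain ⟨hsrc, hdst⟩ := hzero d' (List.mem_of_mem_head? hd')
  rcases Dart.eq_or_eq_symm hedge.symm with rfl | rfl
  · exact hpos.ne' hsrc
  · exact hpos.ne' hdst

theorem IsSCycleCover.one_le_weight_of_boundary (hx : G.IsSCycleCover s x) {p : List G.Dart} {v : V}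
    {g : E} (hp : IsDartWalk s p v) (hback : NonBacktracking p)
    (hlast : ∀ d ∈ p.getLast?, d.edge ≠ g) (hg : g ∈ G.boundaryEdges s x v) : 1 ≤ weight x p := by
  obtain ⟨d, q, rfl, hwalk, hback', hd, hzero⟩ := exists_isDartWalk_of_mem_boundaryEdges hx.1 hg
  calc
    1 ≤ weight x (p ++ d :: q) :=
      hx.one_le_weight ⟨by simp, isDartWalk_append.2 ⟨v, hp, hwalk⟩,
        List.isChain_append.2 ⟨hback, hback', by simpa using hlast⟩⟩
    _ = weight x p := by
      have htail : weight x (d :: q) = 0 :=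
        weight_eq_zero (List.forall_mem_cons.2 ⟨hd, fun d' hd' => (hzero d' hd').2⟩)
      rw [weight_append, htail, add_zero]

theorem IsSCycleCover.one_le_of_nontrivial_boundaryEdges (hx : G.IsSCycleCover s x) {v : V}
    (hv : (G.boundaryEdges s x v).Nontrivial) : 1 ≤ x v := by
  obtain ⟨g, hg, g', hg', hne⟩ := hv
  obtain ⟨d, q, rfl, hwalk, hback, -, hzero⟩ := exists_isDartWalk_of_mem_boundaryEdges hx.1 hg
  have hweight : weight x ((d :: q).reverse.map Dart.symm) = x v := by
    rw [List.reverse_cons, List.map_append, weight_append, weight_eq_zero, zero_add]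
    · simp [weight, Dart.symm, hwalk.1]
    · simpa [Dart.symm] using fun d' hd' => (hzero d' hd').1
  rw [← hweight]
  exact hx.one_le_weight_of_boundary hwalk.reverse hback.reverse
    (by simpa [Dart.symm] using hne) hg'

end ZeroRegion

section RoundedCover

variable {s : V} {x : V → ℝ}

open Classical in
/-- The half-integral cover obtained from a cover `x`: a vertex counts fully if at least two of its
edges lead into the zero region, and half if exactly one does. -/
noncomputable def roundedCover (G : Multigraph V E) (s : V) (x : V → ℝ) (v : V) : ℝ :=
  if (G.boundaryEdges s x v).Nontrivial then 1
  else if (G.boundaryEdges s x v).Nonempty then 1 / 2 else 0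

theorem roundedCover_eq_one {v : V} (h : (G.boundaryEdges s x v).Nontrivial) :
    G.roundedCover s x v = 1 := if_pos h

theorem half_le_roundedCover {v : V} (h : (G.boundaryEdges s x v).Nonempty) :
    1 / 2 ≤ G.roundedCover s x v := by
  unfold roundedCover
  split_ifs <;> norm_num

theorem roundedCover_halfIntegral (G : Multigraph V E) (s : V) (x : V → ℝ) :
    HalfIntegral (G.roundedCover s x) := by
  intro v
  unfold roundedCover
  split_ifs <;> simp

theorem HalfIntegral.nonneg {α : Type} {f : α → ℝ} (hf : HalfIntegral f) (a : α) : 0 ≤ f a := by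
  rcases hf a with h | h | h <;> norm_num [h]

theorem boundaryEdges_nonempty_of_roundedCover_ne_zero {v : V} (h : G.roundedCover s x v ≠ 0) :
    (G.boundaryEdges s x v).Nonempty := by
  by_contra hempty
  exact h ((if_neg fun hnt => hempty hnt.nonempty).trans (if_neg hempty))

theorem roundedCover_eq_zero (hx : ∀ v, 0 ≤ x v) {v : V} (hv : x v = 0) :
    G.roundedCover s x v = 0 := by
  by_contra h
  obtain ⟨g, hg⟩ := boundaryEdges_nonempty_of_roundedCover_ne_zero h
  exact (pos_of_mem_boundaryEdges hx hg).ne' hv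

theorem IsSCycleCover.one_le_of_roundedCover_eq_one (hx : G.IsSCycleCover s x) {v : V}
    (hv : G.roundedCover s x v = 1) : 1 ≤ x v := by
  refine hx.one_le_of_nontrivial_boundaryEdges ?_
  by_contra h
  have : G.roundedCover s x v ≤ 1 / 2 := by
    rw [roundedCover, if_neg h]
    split_ifs <;> norm_num
  norm_num [hv] at this

theorem Walk.IsSCycle.exists_boundary_entry_exit {W : G.Walk} (hW : W.IsSCycle s) (hs : x s = 0)
    (hleave : ∃ i, W.verts i ∉ G.zeroRegion s x) :
    ∃ k m : Fin W.len, W.edges k ∈ G.boundaryEdges s x (W.verts k.succ) ∧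
      W.edges m ∈ G.boundaryEdges s x (W.verts m.castSucc) := by
  classical
  let S : Finset (Fin (W.len + 1)) := {i | W.verts i ∉ G.zeroRegion s x}
  have hmem {i} : i ∈ S ↔ W.verts i ∉ G.zeroRegion s x := by simp [S]
  have hS : S.Nonempty := hleave.imp fun i hi => hmem.2 hi
  have hin {v : V} (hv : v = s) : v ∈ G.zeroRegion s x := by
    rw [hv]; exact self_mem_zeroRegion hs
  obtain ⟨k, hk⟩ : ∃ k : Fin W.len, k.succ = S.min' hS :=
    Fin.exists_succ_eq.2 fun h => hmem.1 (S.min'_mem hS) (h ▸ hin hW.1)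
  obtain ⟨m, hm⟩ : ∃ m : Fin W.len, m.castSucc = S.max' hS :=
    Fin.exists_castSucc_eq.2 fun h => hmem.1 (S.max'_mem hS) (h ▸ hin hW.2.1)
  refine ⟨k, m, ⟨hmem.1 (hk ▸ S.min'_mem hS), W.verts k.castSucc, ?_, ?_⟩,
    ⟨hmem.1 (hm ▸ S.max'_mem hS), W.verts m.succ, ?_, W.valid m⟩⟩
  · by_contra h
    exact (S.min'_le _ (hmem.2 h)).not_gt (hk ▸ Fin.castSucc_lt_succ)
  · exact (W.valid k).trans Sym2.eq_swap
  · by_contra h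
    exact (S.le_max' _ (hmem.2 h)).not_gt (hm ▸ Fin.castSucc_lt_succ)

theorem IsSCycleCover.roundedCover (hx : G.IsSCycleCover s x) :
    G.IsSCycleCover s (G.roundedCover s x) := by
  have hnonneg := (roundedCover_halfIntegral G s x).nonneg
  refine ⟨hnonneg, roundedCover_eq_zero hx.1 hx.2.1, fun W hW => ?_⟩
  have hleave : ∃ i, W.verts i ∉ G.zeroRegion s x := by
    by_contra! hstay
    have := hx.2.2 W hW
    norm_num [fun i => (hstay i).1] at this
  obtain ⟨k, m, hk, hm⟩ := hW.exists_boundary_entry_exit hx.2.1 hleave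
  by_cases heq : k.succ = m.castSucc
  · have hnt : (G.boundaryEdges s x (W.verts k.succ)).Nontrivial :=
      ⟨_, hk, _, heq ▸ hm, hW.2.2.2.1 k m (by simpa using congrArg Fin.val heq)⟩
    exact (roundedCover_eq_one hnt).symm.trans_le
      (single_le_sum (f := fun i => G.roundedCover s x (W.verts i)) (fun i _ => hnonneg _)
        (mem_univ k.succ))
  · have hsum := add_le_sum (f := fun i => G.roundedCover s x (W.verts i))
      (fun i _ => hnonneg (W.verts i)) (mem_univ k.succ) (mem_univ m.castSucc) heq
    linarith [half_le_roundedCover ⟨_, hk⟩, half_le_roundedCover ⟨_, hm⟩]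

end RoundedCover

section Tight

variable {s : V} {x : V → ℝ} {W : G.Walk}

theorem Walk.sum_verts (W : G.Walk) (x : V → ℝ) :
    ∑ i, x (W.verts i) = x W.start + weight x W.darts := by
  rw [Fin.sum_univ_succ, weight, Walk.darts, List.map_ofFn, List.sum_ofFn]
  rfl

theorem Walk.sum_verts_reverse (W : G.Walk) (x : V → ℝ) :
    ∑ i, x (W.reverse.verts i) = ∑ i, x (W.verts i) :=
  Equiv.sum_comp Fin.revPerm fun i => x (W.verts i)

theorem IsSCycleCover.eq_zero_of_lt (hx : G.IsSCycleCover s x) (hW : W.IsSCycle s)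
    (htight : ∑ i, x (W.verts i) = 1) {k : Fin W.len} {g : E}
    (hg : g ∈ G.boundaryEdges s x (W.verts k.succ)) (hne : W.edges k ≠ g) {j : Fin (W.len + 1)}
    (hj : k.succ < j) : x (W.verts j) = 0 := by
  obtain ⟨l, rfl⟩ := Fin.exists_succ_eq.2 (Fin.ne_zero_of_lt hj)
  have hlen : W.darts.length = W.len := List.length_ofFn
  have hwalk : IsDartWalk s (W.darts.take (k + 1)) (W.verts k.succ) := by
    have := W.isDartWalk_darts.take (i := k) (by rw [hlen]; exact k.2)
    rw [hW.1] at this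
    simpa [Walk.darts, Fin.succ] using this
  have hprefix : 1 ≤ weight x (W.darts.take (k + 1)) := by
    refine hx.one_le_weight_of_boundary hwalk (hW.nonBacktracking_darts.take _) ?_ hg
    simpa [List.getLast?_take, Walk.darts] using hne
  have hsum : weight x (W.darts.take (k + 1)) + weight x (W.darts.drop (k + 1)) = 1 := by
    rw [← weight_append, List.take_append_drop, ← htight, W.sum_verts, hW.1, hx.2.1, zero_add]
  have hmem : x (W.verts l.succ) ∈ (W.darts.drop (k + 1)).map fun d => x d.dst := by
    have hkl : (k : ℕ) < l := Fin.succ_lt_succ_iff.1 hj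
    exact List.mem_map_of_mem (f := fun d : G.Dart => x d.dst) (a := ⟨_, _, _, W.valid l⟩)
      (List.mem_drop_iff_getElem.2 ⟨l - (k + 1), by rw [hlen]; omega,
        by simp [Walk.darts, Nat.add_sub_of_le hkl, Fin.succ]⟩)
  have hle : x (W.verts l.succ) ≤ weight x (W.darts.drop (k + 1)) :=
    List.single_le_sum (List.forall_mem_map.2 fun d _ => hx.1 d.dst) _ hmem
  exact le_antisymm (by linarith) (hx.1 _)

theorem IsSCycleCover.eq_zero_of_lt_or_eq_zero_of_gt (hx : G.IsSCycleCover s x)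
    (hW : W.IsSCycle s) (htight : ∑ i, x (W.verts i) = 1) {i : Fin (W.len + 1)}
    (hi : (G.boundaryEdges s x (W.verts i)).Nonempty) :
    (∀ j, i < j → x (W.verts j) = 0) ∨ ∀ j, j < i → x (W.verts j) = 0 := by
  obtain ⟨g, hg⟩ := hi
  have hs : W.verts i ≠ s := fun h =>
    (pos_of_mem_boundaryEdges hx.1 hg).ne' ((congrArg x h).trans hx.2.1)
  obtain ⟨k, hk⟩ : ∃ k : Fin W.len, k.succ = i :=
    Fin.exists_succ_eq.2 fun h => hs (h ▸ hW.1)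
  obtain ⟨m, hm⟩ : ∃ m : Fin W.len, m.castSucc = i :=
    Fin.exists_castSucc_eq.2 fun h => hs (h ▸ hW.2.1)
  have hturn : W.edges k ≠ W.edges m :=
    hW.2.2.2.1 k m (by simpa using congrArg Fin.val (hk.trans hm.symm))
  by_cases hkg : W.edges k = g
  · right
    intro j hj
    have hback := hx.eq_zero_of_lt hW.reverse ((W.sum_verts_reverse x).trans htight) (k := m.rev)
      (j := j.rev) (g := g)
    simp only [Walk.reverse, Function.comp_apply, ← Fin.rev_castSucc, Fin.rev_rev, hm] at hback
    exact hback hg (fun h => hturn (hkg.trans h.symm)) (Fin.rev_lt_rev.2 hj)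
  · exact .inl fun j hj => hx.eq_zero_of_lt hW htight (hk ▸ hg) hkg (hk ▸ hj)

theorem IsSCycleCover.card_boundary_le_two (hx : G.IsSCycleCover s x)
    (hW : W.IsSCycle s) (htight : ∑ i, x (W.verts i) = 1) :
    #{i | G.roundedCover s x (W.verts i) ≠ 0} ≤ 2 := by
  set P : Finset (Fin (W.len + 1)) := {i | G.roundedCover s x (W.verts i) ≠ 0}
  have hboundary {i} (hi : i ∈ P) : (G.boundaryEdges s x (W.verts i)).Nonempty :=
    boundaryEdges_nonempty_of_roundedCover_ne_zero (mem_filter.1 hi).2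
  have hpos {i} (hi : i ∈ P) : x (W.verts i) ≠ 0 := fun h =>
    (mem_filter.1 hi).2 (roundedCover_eq_zero hx.1 h)
  rcases P.eq_empty_or_nonempty with hP | hP
  · simp [hP]
  suffices P ⊆ {P.min' hP, P.max' hP} from (card_le_card this).trans card_le_two
  intro i hi
  rw [mem_insert, mem_singleton]
  rcases hx.eq_zero_of_lt_or_eq_zero_of_gt hW htight (hboundary hi) with hlater | hearlier
  · exact .inr ((P.le_max' i hi).eq_of_not_lt fun h => hpos (P.max'_mem hP) (hlater _ h))
  · exact .inl ((P.min'_le i hi).eq_of_not_lt fun h => hpos (P.min'_mem hP) (hearlier _ h)).symm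

theorem IsSCycleCover.sum_roundedCover_le_one (hx : G.IsSCycleCover s x)
    (hW : W.IsSCycle s) (htight : ∑ i, x (W.verts i) = 1) :
    ∑ i, G.roundedCover s x (W.verts i) ≤ 1 := by
  by_cases hone : ∃ i, G.roundedCover s x (W.verts i) = 1
  · obtain ⟨i, hi⟩ := hone
    have hothers (j) (hj : j ≠ i) : G.roundedCover s x (W.verts j) = 0 := by
      refine roundedCover_eq_zero hx.1 (le_antisymm ?_ (hx.1 _))
      have hpair := add_le_sum (f := fun i => x (W.verts i)) (fun i _ => hx.1 _) (mem_univ j)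
        (mem_univ i) hj
      linarith [hx.one_le_of_roundedCover_eq_one hi]
    rw [Fintype.sum_eq_single i hothers, hi]
  · have hhalf (i) : G.roundedCover s x (W.verts i) ≤ 1 / 2 := by
      rcases roundedCover_halfIntegral G s x (W.verts i) with h | h | h
      · norm_num [h]
      · exact h.le
      · exact absurd ⟨i, h⟩ hone
    calc
      _ = ∑ i with G.roundedCover s x (W.verts i) ≠ 0, G.roundedCover s x (W.verts i) :=
        (sum_filter_ne_zero _).symm
      _ ≤ #{i | G.roundedCover s x (W.verts i) ≠ 0} • (1 / 2 : ℝ) :=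
        sum_le_card_nsmul _ _ _ fun i _ => hhalf i
      _ ≤ 2 • (1 / 2) := nsmul_le_nsmul_left (by norm_num) (hx.card_boundary_le_two hW htight)
      _ = 1 := by norm_num

end Tight

/-! ### Half-integrality of the edge polytope -/

namespace Walk

/-- The number of times a walk traverses the edge `e`. -/
noncomputable def edgeCount (W : G.Walk) (e : E) : ℕ := Nat.card {i : Fin W.len // W.edges i = e}

open Classical in
theorem vertCount_eq_sum (W : G.Walk) (v : V) :
    (W.vertCount v : ℝ) = ∑ i, if W.verts i = v then 1 else 0 := by
  rw [vertCount, Nat.card_eq_fintype_card, Fintype.card_subtype, sum_boole]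

theorem sum_vertCount_mul [Fintype V] (W : G.Walk) (x : V → ℝ) :
    ∑ v, W.vertCount v * x v = ∑ i, x (W.verts i) := by
  classical
  simp only [vertCount_eq_sum, sum_mul, ite_mul, one_mul, zero_mul]
  rw [sum_comm]
  simp only [sum_ite_eq, mem_univ, if_true]

theorem edgeCount_le_vertCount {W : G.Walk}
    (hturn : ∀ i j : Fin W.len, (i : ℕ) + 1 = j → W.edges i ≠ W.edges j) {v : V} {e : E}
    (he : v ∈ G.ends e) : W.edgeCount e ≤ W.vertCount v := by
  classical
  let visit (i : {i : Fin W.len // W.edges i = e}) : {i : Fin (W.len + 1) // W.verts i = v} :=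
    if h : W.verts i.1.castSucc = v then ⟨i.1.castSucc, h⟩ else ⟨i.1.succ, by
      have hends := W.valid i.1
      rw [i.2] at hends
      rcases Sym2.mem_iff.1 (hends ▸ he) with h' | h'
      · exact absurd h'.symm h
      · exact h'.symm⟩
  refine Nat.card_le_card_of_injective visit fun i j hij => Subtype.ext (Fin.ext ?_)
  have hval := congrArg (fun k => (k.1 : ℕ)) hij
  have hij' := hturn i.1 j.1
  have hji' := hturn j.1 i.1
  simp only [i.2, j.2, ne_eq, not_true_eq_false, imp_false, visit] at hval hij' hji'
  split_ifs at hval <;> simp at hval <;> omega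

namespace IsSCycle

variable {W : G.Walk} {s : V}

theorem exists_vertCount_pos (hloop : G.LoopFree) (hW : W.IsSCycle s) :
    ∃ v ≠ s, 0 < W.vertCount v := by
  let k : Fin W.len := ⟨0, W.len_pos⟩
  refine ⟨W.verts k.succ, fun h => hloop (W.edges k) ?_, ?_⟩
  · rw [W.valid k, Sym2.mk_isDiag_iff, h]
    exact hW.1
  · have : Nonempty {i // W.verts i = W.verts k.succ} := ⟨⟨k.succ, rfl⟩⟩
    exact Nat.card_pos

theorem vertCount_self (hW : W.IsSCycle s) : W.vertCount s = 2 := by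
  classical
  have hne : 0 ≠ Fin.last W.len := fun h => W.len_pos.ne (congrArg Fin.val h)
  have hvisits : ({i | W.verts i = s} : Finset (Fin (W.len + 1))) = {0, Fin.last W.len} := by
    ext i
    rw [mem_filter_univ, mem_insert, mem_singleton]
    refine ⟨fun hi => ?_, ?_⟩
    · by_contra! h
      exact hW.2.2.1 i h.1 h.2 hi
    · rintro (rfl | rfl)
      exacts [hW.1, hW.2.1]
  rw [vertCount, Nat.card_eq_fintype_card, Fintype.card_subtype, hvisits, card_pair hne]

theorem len_le [Fintype E] (hW : W.IsSCycle s) : W.len ≤ 2 * Fintype.card E := by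
  classical
  refine (Fintype.card_fin W.len).symm.trans_le <|
    (card_le_mul_card_image univ 2 fun e _ => ?_).trans
      (Nat.mul_le_mul_left 2 (card_le_univ (univ.image W.edges)))
  rw [← Fintype.card_subtype, ← Nat.card_eq_fintype_card]
  exact hW.2.2.2.2 e

end IsSCycle

theorem finite_isSCycle [Finite V] [Finite E] (G : Multigraph V E) (s : V) :
    Finite {W : G.Walk // W.IsSCycle s} := by
  have := Fintype.ofFinite E
  let code (W : {W : G.Walk // W.IsSCycle s}) :
      Σ n : Fin (2 * Fintype.card E + 1), (Fin (n + 1) → V) × (Fin n → E) :=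
    ⟨⟨W.1.len, Nat.lt_succ_of_le W.2.len_le⟩, W.1.verts, W.1.edges⟩
  refine Finite.of_injective code ?_
  rintro ⟨⟨n, _, _, _, _⟩, _⟩ ⟨⟨n', _, _, _, _⟩, _⟩ h
  obtain ⟨rfl⟩ : n = n' := congrArg (fun c => (c.1 : ℕ)) h
  obtain ⟨rfl, rfl⟩ := Prod.ext_iff.1 (eq_of_heq (Sigma.mk.inj_iff.1 h).2)
  rfl

end Walk

section EdgePolytope

variable [Fintype E]

open Classical in
/-- The total weight of the edges incident to `v`, as a linear functional of the edge weights. -/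
noncomputable def weightedDegree (G : Multigraph V E) (v : V) : (E → ℝ) →ₗ[ℝ] ℝ :=
  ∑ e with v ∈ G.ends e, LinearMap.proj e

open Classical in
theorem weightedDegree_apply (v : V) (f : E → ℝ) :
    G.weightedDegree v f = ∑ e with v ∈ G.ends e, f e := by
  simp [weightedDegree]

/-- Edge weights of fractional packings, without regard to their decomposition into `s`-cycles.
A visit to `v` uses up two edge ends at `v`, and they belong to different edges since `s`-cycles
make no U-turns. -/
def edgePolytope (G : Multigraph V E) (s : V) : Set (E → ℝ) :=
  {f | 0 ≤ f ∧ ∀ v ≠ s, G.weightedDegree v f ≤ 2 ∧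
    ∀ e, v ∈ G.ends e → 2 * f e ≤ G.weightedDegree v f}

open Classical in
theorem weightedDegree_edgeCount (hloop : G.LoopFree) (W : G.Walk) (v : V) :
    G.weightedDegree v (fun e => W.edgeCount e) + (if W.start = v then 1 else 0) +
      (if W.finish = v then 1 else 0) = 2 * W.vertCount v := by
  have hends (i : Fin W.len) : (if v ∈ G.ends (W.edges i) then 1 else 0 : ℝ) =
      (if W.verts i.castSucc = v then 1 else 0) + if W.verts i.succ = v then 1 else 0 := by
    have hne : W.verts i.castSucc ≠ W.verts i.succ := fun h =>
      hloop (W.edges i) (by rw [W.valid i, h]; exact rfl)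
    simp only [W.valid i, Sym2.mem_iff, @eq_comm _ v]
    split_ifs <;> simp_all
  have hdegree : G.weightedDegree v (fun e => W.edgeCount e) =
      ∑ i, if v ∈ G.ends (W.edges i) then 1 else 0 := by
    simp only [weightedDegree_apply, Walk.edgeCount, Nat.card_eq_fintype_card,
      Fintype.card_subtype, ← sum_boole]
    rw [sum_comm]
    simp only [sum_ite_eq, mem_filter_univ]
  rw [hdegree, sum_congr rfl fun i _ => hends i, sum_add_distrib, two_mul]
  nth_rw 1 [Walk.vertCount_eq_sum, Fin.sum_univ_castSucc]
  rw [Walk.vertCount_eq_sum, Fin.sum_univ_succ]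
  change _ = _ + (if W.finish = v then 1 else 0) + ((if W.start = v then 1 else 0) + _)
  ring

theorem Walk.IsSCycle.weightedDegree_edgeCount_of_ne (hloop : G.LoopFree) {W : G.Walk} {s v : V}
    (hW : W.IsSCycle s) (hv : v ≠ s) :
    G.weightedDegree v (fun e => W.edgeCount e) = 2 * W.vertCount v := by
  simpa [hW.1, hW.2.1, hv.symm] using weightedDegree_edgeCount hloop W v

theorem Walk.IsSCycle.weightedDegree_edgeCount_self (hloop : G.LoopFree) {W : G.Walk} {s : V}
    (hW : W.IsSCycle s) : G.weightedDegree s (fun e => W.edgeCount e) = 2 := by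
  have := weightedDegree_edgeCount hloop W s
  simp only [hW.1, hW.2.1, hW.vertCount_self, if_true] at this
  push_cast at this
  linarith

theorem exists_mem_edgePolytope {ι : Type*} [Fintype ι] (hloop : G.LoopFree) {s : V}
    {W : ι → G.Walk} (hW : ∀ j, (W j).IsSCycle s) {y : ι → ℝ} (hy : 0 ≤ y)
    (hpacking : ∀ v ≠ s, ∑ j, (W j).vertCount v * y j ≤ 1) :
    ∃ f ∈ G.edgePolytope s, G.weightedDegree s f = 2 * ∑ j, y j := by
  let f : E → ℝ := ∑ j, y j • fun e => ((W j).edgeCount e : ℝ)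
  have hf (e : E) : f e = ∑ j, (W j).edgeCount e * y j := by simp [f, mul_comm]
  have hdegree (v : V) (hv : v ≠ s) :
      G.weightedDegree v f = 2 * ∑ j, (W j).vertCount v * y j := by
    simp only [f, map_sum, map_smul, (hW _).weightedDegree_edgeCount_of_ne hloop hv, smul_eq_mul,
      mul_sum]
    exact sum_congr rfl fun j _ => by ring
  refine ⟨f, ⟨fun e => ?_, fun v hv => ⟨?_, fun e he => ?_⟩⟩, ?_⟩
  · rw [hf]
    exact sum_nonneg fun j _ => mul_nonneg (Nat.cast_nonneg _) (hy j)
  · linarith [hdegree v hv, hpacking v hv]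
  · rw [hdegree v hv, hf]
    gcongr with j
    · exact hy j
    · exact Walk.edgeCount_le_vertCount (hW j).2.2.2.1 he
  · simp only [f, map_sum, map_smul, (hW _).weightedDegree_edgeCount_self hloop, smul_eq_mul,
      ← sum_mul, mul_comm]

end EdgePolytope

theorem LoopFree.exists_mem_ends_ne (hloop : G.LoopFree) (s : V) (e : E) :
    ∃ v ≠ s, v ∈ G.ends e := by
  obtain ⟨a, b, hab⟩ : ∃ a b, G.ends e = s(a, b) := Sym2.ind (fun a b => ⟨a, b, rfl⟩) (G.ends e)
  have hne : a ≠ b := fun h => hloop e (by rw [hab, h]; exact rfl)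
  rw [hab]
  by_cases ha : a = s
  · exact ⟨b, fun hb => hne (ha.trans hb.symm), Sym2.mem_mk_right a b⟩
  · exact ⟨a, ha, Sym2.mem_mk_left a b⟩

section ExtremePoints

variable [Fintype E] {s v : V} {f d : E → ℝ}

theorem le_one_of_mem_edgePolytope (hloop : G.LoopFree) (hf : f ∈ G.edgePolytope s) (e : E) :
    f e ≤ 1 := by
  obtain ⟨v, hv, he⟩ := hloop.exists_mem_ends_ne s e
  linarith [(hf.2 v hv).1, (hf.2 v hv).2 e he]

theorem isCompact_edgePolytope (hloop : G.LoopFree) (s : V) : IsCompact (G.edgePolytope s) := by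
  have hcont (v : V) : Continuous (G.weightedDegree v) :=
    LinearMap.continuous_of_finiteDimensional _
  refine (isCompact_Icc (a := (0 : E → ℝ)) (b := 1)).of_isClosed_subset ?_
    fun f hf => ⟨hf.1, le_one_of_mem_edgePolytope hloop hf⟩
  simp only [edgePolytope, Set.ofPred_and, Set.ofPred_forall]
  refine isClosed_Ici.inter (isClosed_iInter fun v => isClosed_iInter fun _ => ?_)
  refine (isClosed_le (hcont v) continuous_const).inter ?_
  exact isClosed_iInter fun e => isClosed_iInter fun _ =>
    isClosed_le (continuous_const.mul (continuous_apply e)) (hcont v)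

/-- Moving `f` in the direction `d` preserves those constraints of the edge polytope at `v` which
are equalities at `f`. -/
def PreservesTight (G : Multigraph V E) (v : V) (f d : E → ℝ) : Prop :=
  (G.weightedDegree v f = 2 → G.weightedDegree v d = 0) ∧
    ∀ e, v ∈ G.ends e → 2 * f e = G.weightedDegree v f → 2 * d e = G.weightedDegree v d

theorem eventually_mem_edgePolytope [Finite V] (hf : f ∈ G.edgePolytope s)
    (hzero : ∀ e, f e = 0 → d e = 0) (htight : ∀ v ≠ s, PreservesTight G v f d) :
    ∀ᶠ t : ℝ in 𝓝 0, f + t • d ∈ G.edgePolytope s := by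
  refine .and ?_ (Filter.eventually_all.2 fun v => Filter.eventually_imp_distrib_left.2 fun hv =>
    .and ?_ (Filter.eventually_all.2 fun e => Filter.eventually_imp_distrib_left.2 fun he => ?_))
  · exact Filter.eventually_all.2 fun e => eventually_nonneg_add_mul (hf.1 e) (hzero e)
  · filter_upwards [eventually_nonneg_add_mul (sub_nonneg.2 (hf.2 v hv).1)
      fun h => neg_eq_zero.2 ((htight v hv).1 (sub_eq_zero.1 h).symm)] with t ht
    simp only [map_add, map_smul, smul_eq_mul]
    linarith
  · filter_upwards [eventually_nonneg_add_mul (sub_nonneg.2 ((hf.2 v hv).2 e he))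
      fun h => sub_eq_zero.2 ((htight v hv).2 e he (sub_eq_zero.1 h).symm).symm] with t ht
    simp only [map_add, map_smul, smul_eq_mul, Pi.add_apply, Pi.smul_apply]
    linarith

end ExtremePoints

/-- The direction `d` only changes fractional weights. -/
def FixesIntegral (f d : E → ℝ) : Prop := ∀ e, f e = 0 ∨ f e = 1 → d e = 0

/-- The signed distance of the fractional weights from `1 / 2`. -/
noncomputable def halfDeviation (f : E → ℝ) (e : E) : ℝ :=
  open Classical in if f e = 0 ∨ f e = 1 then 0 else f e - 1 / 2

theorem fixesIntegral_halfDeviation (f : E → ℝ) : FixesIntegral f (halfDeviation f) :=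
  fun _ he => if_pos he

section FractionalEdges

variable [Fintype E] {s v : V} {f d : E → ℝ}

open Classical in
/-- The edges at `v` whose weight is neither `0` nor `1`. -/
noncomputable def fractionalEdges (G : Multigraph V E) (f : E → ℝ) (v : V) : Finset E :=
  {e | v ∈ G.ends e ∧ f e ≠ 0 ∧ f e ≠ 1}

theorem mem_fractionalEdges {e : E} :
    e ∈ G.fractionalEdges f v ↔ v ∈ G.ends e ∧ f e ≠ 0 ∧ f e ≠ 1 := by
  simp [fractionalEdges]

theorem weightedDegree_eq_sum_fractionalEdges (hd : FixesIntegral f d) (v : V) :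
    G.weightedDegree v d = ∑ e ∈ G.fractionalEdges f v, d e := by
  classical
  rw [weightedDegree_apply]
  refine (sum_subset (fun e he => ?_) fun e he he' => hd e ?_).symm
  · exact mem_filter_univ e |>.2 (mem_fractionalEdges.1 he).1
  · by_contra! h
    exact he' (mem_fractionalEdges.2 ⟨mem_filter_univ e |>.1 he, h⟩)

theorem exists_weightedDegree_eq_sum_fractionalEdges_add (f : E → ℝ) (v : V) :
    ∃ n : ℕ, G.weightedDegree v f = ∑ e ∈ G.fractionalEdges f v, f e + n := by
  classical
  let frac (e : E) : ℝ := if f e = 0 ∨ f e = 1 then 0 else f e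
  let ones (e : E) : ℝ := if f e = 1 then 1 else 0
  have hsplit : f = frac + ones := by
    ext e
    by_cases h₀ : f e = 0 <;> by_cases h₁ : f e = 1 <;> simp [frac, ones, h₀, h₁]
  have hfrac : FixesIntegral f frac := fun e he => if_pos he
  refine ⟨#{e ∈ ({e | v ∈ G.ends e} : Finset E) | f e = 1}, ?_⟩
  conv_lhs => rw [hsplit, map_add, weightedDegree_eq_sum_fractionalEdges hfrac]
  congr 1
  · refine sum_congr rfl fun e he => if_neg ?_
    simpa [not_or] using (mem_fractionalEdges.1 he).2
  · rw [weightedDegree_apply, sum_boole]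

theorem mem_Ioo_of_mem_fractionalEdges (hloop : G.LoopFree) (hf : f ∈ G.edgePolytope s) {e : E}
    (he : e ∈ G.fractionalEdges f v) : f e ∈ Set.Ioo 0 1 :=
  have h := (mem_fractionalEdges.1 he).2
  ⟨(hf.1 e).lt_of_ne' h.1, (le_one_of_mem_edgePolytope hloop hf e).lt_of_ne h.2⟩

theorem eq_zero_or_one_of_notMem_fractionalEdges {e : E} (he : v ∈ G.ends e)
    (h : e ∉ G.fractionalEdges f v) : f e = 0 ∨ f e = 1 := by
  by_contra! hf
  exact h (mem_fractionalEdges.2 ⟨he, hf⟩)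

theorem sum_fractionalEdges_le (f : E → ℝ) (v : V) :
    ∑ e ∈ G.fractionalEdges f v, f e ≤ G.weightedDegree v f := by
  obtain ⟨n, hn⟩ := exists_weightedDegree_eq_sum_fractionalEdges_add (G := G) f v
  linarith [n.cast_nonneg (α := ℝ)]

theorem preservesTight_of_card_le_one (hloop : G.LoopFree) (hf : f ∈ G.edgePolytope s)
    (hcard : #(G.fractionalEdges f v) ≤ 1) (hd : FixesIntegral f d) : PreservesTight G v f d := by
  rcases (G.fractionalEdges f v).eq_empty_or_nonempty with hempty | hne
  · have hzero {e} (he : v ∈ G.ends e) : d e = 0 :=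
      hd e (eq_zero_or_one_of_notMem_fractionalEdges he (by simp [hempty]))
    have hdegree : G.weightedDegree v d = 0 := by
      rw [weightedDegree_eq_sum_fractionalEdges hd, hempty, sum_empty]
    exact ⟨fun _ => hdegree, fun e he _ => by rw [hdegree, hzero he, mul_zero]⟩
  · obtain ⟨e₀, he₀⟩ := card_eq_one.1 (hcard.antisymm hne.card_pos)
    obtain ⟨n, hn⟩ := exists_weightedDegree_eq_sum_fractionalEdges_add (G := G) f v
    rw [he₀, sum_singleton] at hn
    have hint := ne_intCast_of_mem_Ioo
      (mem_Ioo_of_mem_fractionalEdges hloop hf (he₀ ▸ mem_singleton_self e₀))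
    refine ⟨fun h => absurd ?_ (hint (2 - n)), fun e he h => ?_⟩
    · push_cast
      linarith
    by_cases hee₀ : e = e₀
    · subst hee₀
      exact absurd (by push_cast; linarith) (hint n)
    · rcases eq_zero_or_one_of_notMem_fractionalEdges (f := f) he (by simp [he₀, hee₀])
        with h' | h'
      · exact absurd (by push_cast; linarith) (hint (-n))
      · exact absurd (by push_cast; linarith) (hint (2 - n))

theorem halfDeviation_of_mem {e : E} (he : e ∈ G.fractionalEdges f v) :
    halfDeviation f e = f e - 1 / 2 :=
  if_neg (by simpa [not_or] using (mem_fractionalEdges.1 he).2)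

/-- A linear equation on directions which implies that the constraints tight at `v` are preserved,
and which holds for the direction towards `1 / 2` if `v` has only two fractional edges. -/
def IsVertexEquation (G : Multigraph V E) (f : E → ℝ) (v : V) (L : (E → ℝ) →ₗ[ℝ] ℝ) : Prop :=
  (∀ d, FixesIntegral f d → L d = 0 → PreservesTight G v f d) ∧
    (#(G.fractionalEdges f v) = 2 → L (halfDeviation f) = 0)

theorem fractionalEdges_eq_pair_of_le (hloop : G.LoopFree) (hf : f ∈ G.edgePolytope s) {a b : E}
    (ha : a ∈ G.fractionalEdges f v) (hb : b ∈ G.fractionalEdges f v) (hab : a ≠ b)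
    (hle : G.weightedDegree v f ≤ f a + f b) : (G.fractionalEdges f v : Set E) = {a, b} := by
  classical
  refine Set.Subset.antisymm (fun e he => ?_) (by simp [Set.insert_subset_iff, ha, hb])
  by_contra! hne
  simp only [Set.mem_insert_iff, Set.mem_singleton_iff, not_or] at hne
  have hsub : {e, a, b} ⊆ G.fractionalEdges f v := by
    simpa [insert_subset_iff, ha, hb] using he
  have hsum := (sum_le_sum_of_subset_of_nonneg hsub fun e _ _ => hf.1 e).trans
    (sum_fractionalEdges_le f v)
  rw [sum_insert (by simp [hne]), sum_pair hab] at hsum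
  linarith [(mem_Ioo_of_mem_fractionalEdges hloop hf he).1]

theorem isVertexEquation_of_dominant (hloop : G.LoopFree) (hf : f ∈ G.edgePolytope s) {e₀ : E}
    (he₀ : e₀ ∈ G.fractionalEdges f v) (hdom : 2 * f e₀ = G.weightedDegree v f) :
    IsVertexEquation G f v (G.weightedDegree v - (2 : ℝ) • LinearMap.proj e₀) := by
  classical
  have hIoo {e} := mem_Ioo_of_mem_fractionalEdges hloop hf (e := e) (v := v)
  refine ⟨fun d hd hL => ⟨fun h => ?_, fun e he h => ?_⟩, fun hcard => ?_⟩
  · linarith [(hIoo he₀).2]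
  · replace hL : G.weightedDegree v d = 2 * d e₀ := sub_eq_zero.1 hL
    by_cases hne : e₀ = e
    · rw [hL, hne]
    have hfe : f e = f e₀ := by linarith
    have he' : e ∈ G.fractionalEdges f v :=
      mem_fractionalEdges.2 ⟨he, hfe ▸ (mem_fractionalEdges.1 he₀).2⟩
    have hpair : G.fractionalEdges f v = {e₀, e} := by
      exact_mod_cast fractionalEdges_eq_pair_of_le hloop hf he₀ he' hne (by linarith)
    have hsum := weightedDegree_eq_sum_fractionalEdges (G := G) hd v
    rw [hpair, sum_pair hne] at hsum
    linarith
  · obtain ⟨e₁, hne, hpair⟩ : ∃ e₁, e₀ ≠ e₁ ∧ G.fractionalEdges f v = {e₀, e₁} := by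
      obtain ⟨a, b, hab, hpair⟩ := card_eq_two.1 hcard
      rw [hpair, mem_insert, mem_singleton] at he₀
      rcases he₀ with rfl | rfl
      exacts [⟨b, hab, hpair⟩, ⟨a, hab.symm, hpair.trans (pair_comm _ _)⟩]
    have he₁ : e₁ ∈ G.fractionalEdges f v := by simp [hpair]
    obtain ⟨n, hn⟩ := exists_weightedDegree_eq_sum_fractionalEdges_add (G := G) f v
    rw [hpair, sum_pair hne] at hn
    have hn₀ : n = 0 := by
      have : (n : ℝ) < 1 := by linarith [(hIoo he₀).2, (hIoo he₁).1]
      exact Nat.lt_one_iff.1 (by exact_mod_cast this)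
    have hsum := weightedDegree_eq_sum_fractionalEdges (G := G) (fixesIntegral_halfDeviation f) v
    rw [hpair, sum_pair hne, halfDeviation_of_mem he₀, halfDeviation_of_mem he₁] at hsum
    simp only [LinearMap.sub_apply, LinearMap.smul_apply, LinearMap.proj_apply, smul_eq_mul, hsum,
      halfDeviation_of_mem he₀]
    rw [hn₀, Nat.cast_zero] at hn
    linarith

theorem isVertexEquation_of_weightedDegree_eq_two (hloop : G.LoopFree)
    (hf : f ∈ G.edgePolytope s) (htwo : G.weightedDegree v f = 2) :
    IsVertexEquation G f v (G.weightedDegree v) := by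
  classical
  refine ⟨fun d hd hL => ⟨fun _ => hL, fun e _ h => ?_⟩, fun hcard => ?_⟩
  · rw [hL, hd e (.inr (by linarith)), mul_zero]
  · obtain ⟨a, b, hab, hpair⟩ := card_eq_two.1 hcard
    have ha : a ∈ G.fractionalEdges f v := by simp [hpair]
    have hb : b ∈ G.fractionalEdges f v := by simp [hpair]
    obtain ⟨n, hn⟩ := exists_weightedDegree_eq_sum_fractionalEdges_add (G := G) f v
    rw [htwo, hpair, sum_pair hab] at hn
    have hIooa := mem_Ioo_of_mem_fractionalEdges hloop hf ha
    have hIoob := mem_Ioo_of_mem_fractionalEdges hloop hf hb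
    have hn₁ : n = 1 := by
      have hpos : (0 : ℝ) < n := by linarith [hIooa.2, hIoob.2]
      have hlt : (n : ℝ) < 2 := by linarith [hIooa.1, hIoob.1]
      have hpos' : 0 < n := by exact_mod_cast hpos
      have hlt' : n < 2 := by exact_mod_cast hlt
      omega
    rw [weightedDegree_eq_sum_fractionalEdges (fixesIntegral_halfDeviation f), hpair,
      sum_pair hab, halfDeviation_of_mem ha, halfDeviation_of_mem hb]
    rw [hn₁, Nat.cast_one] at hn
    linarith

theorem exists_isVertexEquation (hloop : G.LoopFree) (hf : f ∈ G.edgePolytope s)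
    (hne : (G.fractionalEdges f v).Nonempty) : ∃ L, IsVertexEquation G f v L := by
  by_cases htwo : G.weightedDegree v f = 2
  · exact ⟨_, isVertexEquation_of_weightedDegree_eq_two hloop hf htwo⟩
  by_cases hdom : ∃ e ∈ G.fractionalEdges f v, 2 * f e = G.weightedDegree v f
  · obtain ⟨e, he, h⟩ := hdom
    exact ⟨_, isVertexEquation_of_dominant hloop hf he h⟩
  push Not at hdom
  refine ⟨0, fun d _ _ => ⟨fun h => absurd h htwo, fun e he h => ?_⟩, fun _ => rfl⟩
  have hpos : 0 < ∑ e ∈ G.fractionalEdges f v, f e :=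
    sum_pos (fun e he => (mem_Ioo_of_mem_fractionalEdges hloop hf he).1) hne
  rcases eq_zero_or_one_of_notMem_fractionalEdges he fun he' => hdom e he' h with h' | h'
  · linarith [sum_fractionalEdges_le (G := G) f v]
  · exact absurd (by linarith) htwo

end FractionalEdges

theorem LoopFree.card_ends (hloop : G.LoopFree) (e : E) : Nat.card {v // v ∈ G.ends e} = 2 := by
  classical
  rw [← Sym2.card_toFinset_of_not_isDiag _ (hloop e)]
  exact Nat.subtype_card _ fun _ => Sym2.mem_toFinset

open Classical in
theorem sum_card_fractionalEdges [Fintype V] [Fintype E] (hloop : G.LoopFree) (f : E → ℝ) :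
    ∑ v, #(G.fractionalEdges f v) = 2 * #{e | f e ≠ 0 ∧ f e ≠ 1} := by
  have hends (e : E) : #{v | v ∈ G.ends e} = 2 := by
    rw [← Fintype.card_subtype, ← Nat.card_eq_fintype_card, hloop.card_ends]
  have hcount := sum_card_bipartiteAbove_eq_sum_card_bipartiteBelow
    (s := univ) (t := {e | f e ≠ 0 ∧ f e ≠ 1}) fun v e => v ∈ G.ends e
  simp only [bipartiteAbove, bipartiteBelow, hends, sum_const, smul_eq_mul, filter_filter]
    at hcount
  rw [mul_comm, ← hcount]
  exact sum_congr rfl fun v _ => congrArg card (by ext e; simp [mem_fractionalEdges, and_comm])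

section HalfIntegrality

variable [Finite V] [Fintype E] {s v : V} {f : E → ℝ}

theorem eq_zero_of_isVertexEquation (hloop : G.LoopFree)
    (hf : f ∈ (G.edgePolytope s).extremePoints ℝ) {L : V → (E → ℝ) →ₗ[ℝ] ℝ}
    (hL : ∀ v ≠ s, 1 < #(G.fractionalEdges f v) → IsVertexEquation G f v (L v)) {d : E → ℝ}
    (hd : FixesIntegral f d) (hzero : ∀ v ≠ s, 1 < #(G.fractionalEdges f v) → L v d = 0) :
    d = 0 := by
  refine eq_zero_of_mem_extremePoints_of_eventually hf
    (eventually_mem_edgePolytope hf.1 (fun e he => hd e (.inl he)) fun v hv => ?_)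
  rcases le_or_gt #(G.fractionalEdges f v) 1 with hcard | hcard
  · exact preservesTight_of_card_le_one hloop hf.1 hcard hd
  · exact (hL v hv hcard).1 d hd (hzero v hv hcard)

open Classical in
theorem card_fractionalEdges_of_mem_extremePoints (hloop : G.LoopFree)
    (hf : f ∈ (G.edgePolytope s).extremePoints ℝ) {L : V → (E → ℝ) →ₗ[ℝ] ℝ}
    (hL : ∀ v ≠ s, 1 < #(G.fractionalEdges f v) → IsVertexEquation G f v (L v)) (v : V) :
    #(G.fractionalEdges f v) = if v ≠ s ∧ 1 < #(G.fractionalEdges f v) then 2 else 0 := by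
  have := Fintype.ofFinite V
  let T : Finset V := {v | v ≠ s ∧ 1 < #(G.fractionalEdges f v)}
  have hcard : #{e | f e ≠ 0 ∧ f e ≠ 1} ≤ #T := by
    refine card_le_card_of_forall_eq_zero L fun d hd hT => ?_
    refine eq_zero_of_isVertexEquation hloop hf hL (fun e he => hd e ?_) fun v hv hcard =>
      hT v (mem_filter_univ v |>.2 ⟨hv, hcard⟩)
    rw [mem_filter_univ]
    tauto
  have hle (v : V) : (if v ∈ T then 2 else 0) ≤ #(G.fractionalEdges f v) := by
    split_ifs with hv
    · exact (mem_filter_univ v |>.1 hv).2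
    · exact Nat.zero_le _
  have hsum : ∑ v, (if v ∈ T then 2 else 0) = ∑ v, #(G.fractionalEdges f v) := by
    refine (sum_le_sum fun v _ => hle v).antisymm ?_
    rw [sum_card_fractionalEdges hloop, sum_ite_mem, univ_inter, sum_const, smul_eq_mul]
    omega
  have := (sum_eq_sum_iff_of_le fun v _ => hle v).1 hsum v (mem_univ v)
  simpa only [T, mem_filter_univ] using this.symm

theorem halfIntegral_of_mem_extremePoints (hloop : G.LoopFree)
    (hf : f ∈ (G.edgePolytope s).extremePoints ℝ) :
    HalfIntegral f ∧ ∀ v, ∃ k : ℕ, G.weightedDegree v f = k := by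
  classical
  have hL (v : V) : ∃ L : (E → ℝ) →ₗ[ℝ] ℝ,
      1 < #(G.fractionalEdges f v) → IsVertexEquation G f v L := by
    by_cases hcard : 1 < #(G.fractionalEdges f v)
    · obtain ⟨L, hL⟩ := exists_isVertexEquation hloop hf.1 (card_pos.1 (Nat.zero_lt_of_lt hcard))
      exact ⟨L, fun _ => hL⟩
    · exact ⟨0, fun h => absurd h hcard⟩
  choose L hL using hL
  have hcard := card_fractionalEdges_of_mem_extremePoints hloop hf fun v _ => hL v
  have hdev : halfDeviation f = 0 := by
    refine eq_zero_of_isVertexEquation hloop hf (fun v _ => hL v) (fixesIntegral_halfDeviation f)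
      fun v hv h => (hL v h).2 ?_
    rw [hcard v, if_pos ⟨hv, h⟩]
  have hhalf {e : E} (he : ¬(f e = 0 ∨ f e = 1)) : f e = 1 / 2 := by
    have := congrFun hdev e
    rw [halfDeviation, if_neg he] at this
    exact sub_eq_zero.1 this
  refine ⟨fun e => ?_, fun v => ?_⟩
  · have := hhalf (e := e)
    tauto
  · obtain ⟨n, hn⟩ := exists_weightedDegree_eq_sum_fractionalEdges_add (G := G) f v
    have hsum : ∑ e ∈ G.fractionalEdges f v, f e = #(G.fractionalEdges f v) * (1 / 2) := by
      rw [← nsmul_eq_mul, ← sum_const]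
      exact sum_congr rfl fun e he => hhalf (not_or.2 (mem_fractionalEdges.1 he).2)
    rw [hsum, hcard v] at hn
    split_ifs at hn
    · exact ⟨1 + n, by push_cast at hn ⊢; linarith⟩
    · exact ⟨n, by simpa using hn⟩

theorem exists_halfIntegral_mem_edgePolytope (hloop : G.LoopFree) (hf : f ∈ G.edgePolytope s) :
    ∃ g ∈ G.edgePolytope s, HalfIntegral g ∧ (∀ v, ∃ k : ℕ, G.weightedDegree v g = k) ∧
      G.weightedDegree s f ≤ G.weightedDegree s g := by
  obtain ⟨g, hg, hmax⟩ := exists_mem_extremePoints_forall_le (isCompact_edgePolytope hloop s)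
    ⟨f, hf⟩ (LinearMap.toContinuousLinearMap (G.weightedDegree s))
  obtain ⟨hhalf, hdegree⟩ := halfIntegral_of_mem_extremePoints hloop hg
  exact ⟨g, hg.1, hhalf, hdegree, hmax f hf⟩

end HalfIntegrality

/-! ### Tracing closed walks -/

/-- Flags, that is edge copies with a chosen end, glued together into a collection of trails:
`flip` moves to the other end of an edge copy, and `turn` moves at a vertex to the flag of the
edge copy by which a trail arriving there continues. Trails do not make U-turns, except that they
may end at `s`. -/
structure FlagSystem (G : Multigraph V E) (s : V) (D : Type*) where
  vertex : D → V
  edge : D → E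
  flip : D → D
  turn : D → D
  flip_involutive : Function.Involutive flip
  turn_involutive : Function.Involutive turn
  edge_flip : ∀ d, edge (flip d) = edge d
  vertex_turn : ∀ d, vertex (turn d) = vertex d
  ends_edge : ∀ d, G.ends (edge d) = s(vertex d, vertex (flip d))
  edge_turn_ne : ∀ d, vertex d ≠ s → edge (turn d) ≠ edge d

namespace FlagSystem

variable {s : V} {D : Type*} (Φ : FlagSystem G s D)

theorem vertex_flip_ne (hloop : G.LoopFree) (d : D) : Φ.vertex (Φ.flip d) ≠ Φ.vertex d := by
  intro h
  apply hloop (Φ.edge d)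
  rw [Φ.ends_edge, h]
  exact rfl

/-- The flags by which the trail starting with the flag `c` leaves its vertices. -/
def trace (c : D) (i : ℕ) : D := (Φ.turn ∘ Φ.flip)^[i] c

theorem trace_succ (c : D) (i : ℕ) : Φ.trace c (i + 1) = Φ.turn (Φ.flip (Φ.trace c i)) :=
  Function.iterate_succ_apply' ..

theorem turn_trace_succ (c : D) (i : ℕ) : Φ.turn (Φ.trace c (i + 1)) = Φ.flip (Φ.trace c i) := by
  rw [trace_succ, Φ.turn_involutive]

theorem vertex_trace_succ (c : D) (i : ℕ) :
    Φ.vertex (Φ.trace c (i + 1)) = Φ.vertex (Φ.flip (Φ.trace c i)) := by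
  rw [trace_succ, Φ.vertex_turn]

theorem eq_trace_of_trace_eq {c c' : D} {i j : ℕ} (hij : i ≤ j)
    (h : Φ.trace c i = Φ.trace c' j) : c = Φ.trace c' (j - i) := by
  refine (Φ.turn_involutive.injective.comp Φ.flip_involutive.injective).iterate i ?_
  rw [trace, ← Function.iterate_add_apply, Nat.add_sub_cancel' hij]
  exact h

/-- The number of intermediate vertices on the trail from `c` to its first return to `s`. -/
noncomputable def returnTime (c : D) : ℕ := sInf {n | Φ.vertex (Φ.trace c (n + 1)) = s}

theorem vertex_trace_ne {c : D} {i : ℕ} (h₀ : i ≠ 0) (hi : i ≤ Φ.returnTime c) :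
    Φ.vertex (Φ.trace c i) ≠ s := by
  obtain ⟨n, rfl⟩ := Nat.exists_eq_succ_of_ne_zero h₀
  exact Nat.notMem_of_lt_sInf (s := {n | Φ.vertex (Φ.trace c (n + 1)) = s}) hi

/-- The flags at `s`. -/
abbrev Root : Type _ := {c : D // Φ.vertex c = s}

variable {Φ}

theorem Root.trace_injective {c c' : Φ.Root} {i j : ℕ} (hi : i ≤ Φ.returnTime c.1)
    (hj : j ≤ Φ.returnTime c'.1) (h : Φ.trace c.1 i = Φ.trace c'.1 j) : c = c' ∧ i = j := by
  wlog hij : i ≤ j generalizing c c' i j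
  · exact (this hj hi h.symm (le_of_not_ge hij)).imp Eq.symm Eq.symm
  have htrace := Φ.eq_trace_of_trace_eq hij h
  by_cases hji : j - i = 0
  · rw [hji] at htrace
    exact ⟨Subtype.ext htrace, hij.antisymm (Nat.sub_eq_zero_iff_le.1 hji)⟩
  · exact absurd (htrace ▸ c.2) (Φ.vertex_trace_ne hji (by omega))

section Return

variable [Finite D]

theorem Root.vertex_trace_returnTime_add_one (c : Φ.Root) :
    Φ.vertex (Φ.trace c.1 (Φ.returnTime c.1 + 1)) = s := by
  obtain ⟨n, hn, hperiod⟩ :=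
    (Φ.turn_involutive.injective.comp Φ.flip_involutive.injective).mem_periodicPts c.1
  have hreturn : n - 1 ∈ {n | Φ.vertex (Φ.trace c.1 (n + 1)) = s} := by
    rw [Set.mem_ofPred_eq, Nat.sub_add_cancel hn]
    exact (congrArg Φ.vertex hperiod).trans c.2
  exact Nat.sInf_mem ⟨_, hreturn⟩

/-- The last edge of the trail starting with `c`, taken backwards; it starts the reverse trail. -/
noncomputable def reversal (c : Φ.Root) : Φ.Root :=
  ⟨Φ.flip (Φ.trace c.1 (Φ.returnTime c.1)),
    (Φ.vertex_trace_succ _ _).symm.trans c.vertex_trace_returnTime_add_one⟩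

theorem trace_reversal (c : Φ.Root) {i : ℕ} (hi : i ≤ Φ.returnTime c.1) :
    Φ.trace (reversal c).1 i = Φ.flip (Φ.trace c.1 (Φ.returnTime c.1 - i)) := by
  induction i with
  | zero => rfl
  | succ i ih =>
    rw [trace_succ, ih (by omega), Φ.flip_involutive,
      show Φ.returnTime c.1 - i = Φ.returnTime c.1 - (i + 1) + 1 by omega, turn_trace_succ]

theorem returnTime_reversal (c : Φ.Root) :
    Φ.returnTime (reversal c).1 = Φ.returnTime c.1 := by
  refine le_antisymm (Nat.sInf_le ?_) (le_of_not_gt fun hlt => ?_)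
  · change Φ.vertex (Φ.trace _ _) = s
    rw [vertex_trace_succ, trace_reversal c le_rfl, Φ.flip_involutive, Nat.sub_self]
    exact c.2
  · have := (reversal c).vertex_trace_returnTime_add_one
    rw [vertex_trace_succ, trace_reversal c hlt.le, Φ.flip_involutive] at this
    exact Φ.vertex_trace_ne (by omega) (Nat.sub_le _ _) this

theorem reversal_involutive : Function.Involutive (reversal (Φ := Φ)) := by
  intro c
  refine Subtype.ext ?_
  change Φ.flip (Φ.trace (reversal c).1 (Φ.returnTime (reversal c).1)) = c.1
  rw [returnTime_reversal, trace_reversal c le_rfl, Φ.flip_involutive, Nat.sub_self]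
  rfl

theorem eq_reversal_of_trace_eq_flip_trace {c c' : Φ.Root} {i j : ℕ}
    (hi : i ≤ Φ.returnTime c.1) (hj : j ≤ Φ.returnTime c'.1)
    (h : Φ.trace c.1 i = Φ.flip (Φ.trace c'.1 j)) : c = reversal c' := by
  have hrev := trace_reversal c' (Nat.sub_le _ j)
  rw [Nat.sub_sub_self hj, ← h] at hrev
  exact (Root.trace_injective hi (by rw [returnTime_reversal]; exact Nat.sub_le _ _) hrev.symm).1

-- A trail equal to its reverse would be folded at a vertex or at the middle of an edge; the former
-- is a U-turn and the latter a loop.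
theorem reversal_ne (hloop : G.LoopFree) (c : Φ.Root) : reversal c ≠ c := by
  intro h
  have hfold {i : ℕ} (hi : i ≤ Φ.returnTime c.1) :
      Φ.trace c.1 i = Φ.flip (Φ.trace c.1 (Φ.returnTime c.1 - i)) := by
    rw [← trace_reversal c hi, h]
  obtain ⟨k, hk | hk⟩ := Nat.even_or_odd' (Φ.returnTime c.1)
  · have hmid := hfold (i := k) (by omega)
    rw [show Φ.returnTime c.1 - k = k by omega] at hmid
    exact Φ.vertex_flip_ne hloop _ (congrArg Φ.vertex hmid.symm)
  · have hmid := hfold (i := k + 1) (by omega)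
    rw [show Φ.returnTime c.1 - (k + 1) = k by omega, ← turn_trace_succ] at hmid
    exact Φ.edge_turn_ne _ (Φ.vertex_trace_ne k.succ_ne_zero (by omega))
      (congrArg Φ.edge hmid.symm)

end Return

/-- The closed walk along the trail starting with `c`, up to its first return to `s`. -/
noncomputable def walk (c : Φ.Root) : G.Walk where
  len := Φ.returnTime c.1 + 1
  len_pos := Nat.succ_pos _
  verts i := Φ.vertex (Φ.trace c.1 i)
  edges i := Φ.edge (Φ.trace c.1 i)
  valid i := by rw [Φ.ends_edge, Fin.val_succ, vertex_trace_succ]; rfl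

section Load

variable [Finite D]

theorem isSCycle_walk (hloop : G.LoopFree) (hedge : ∀ e, Nat.card {d // Φ.edge d = e} ≤ 4)
    (c : Φ.Root) : (walk c).IsSCycle s := by
  refine ⟨c.2, c.vertex_trace_returnTime_add_one, fun i h₀ hlast => ?_, fun i j hij => ?_,
    fun e => ?_⟩
  · have : (i : ℕ) ≠ Φ.returnTime c.1 + 1 := fun h => hlast (Fin.ext h)
    have : (i : ℕ) < Φ.returnTime c.1 + 1 + 1 := i.2
    exact Φ.vertex_trace_ne (Fin.val_ne_zero_iff.2 h₀) (by omega)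
  · have hj : (i : ℕ) + 1 ≤ Φ.returnTime c.1 := by have : (j : ℕ) < _ + 1 := j.2; omega
    have hturn := Φ.edge_turn_ne _ (Φ.vertex_trace_ne (Nat.add_one_ne_zero i) hj)
    rw [turn_trace_succ, Φ.edge_flip, hij] at hturn
    exact hturn
  · let flag (i : {i // (walk c).edges i = e}) : {d // Φ.edge d = e} := ⟨Φ.trace c.1 i.1, i.2⟩
    have hle (i : Fin (walk c).len) : (i : ℕ) ≤ Φ.returnTime c.1 := Nat.le_of_lt_succ i.2
    have hinj : Function.Injective flag := fun i j h => Subtype.ext <| Fin.ext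
      (Root.trace_injective (hle i.1) (hle j.1) (congrArg Subtype.val h)).2
    let flipFlag (d : {d // Φ.edge d = e}) : {d // Φ.edge d = e} :=
      ⟨Φ.flip d.1, (Φ.edge_flip _).trans d.2⟩
    have hflip : Function.Injective flipFlag := fun d d' h => Subtype.ext <|
      Φ.flip_involutive.injective (congrArg Subtype.val h)
    have := two_mul_card_le_of_injective hinj (hflip.comp hinj) fun i j h =>
      reversal_ne hloop c (eq_reversal_of_trace_eq_flip_trace (hle i.1) (hle j.1)
        (congrArg Subtype.val h)).symm
    have := hedge e
    omega

end Load

end FlagSystem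

namespace FlagSystem

variable {s : V} {D : Type*} {Φ : FlagSystem G s D}

theorem two_mul_sum_vertCount_walk_le [Finite D] {T : Finset Φ.Root}
    (hT : ∀ c ∈ T, reversal c ∉ T) {v : V} (hv : v ≠ s) :
    2 * ∑ c ∈ T, (walk c).vertCount v ≤ Nat.card {d // Φ.vertex d = v} := by
  let visit (p : Σ c : T, {i // (walk c.1).verts i = v}) : {d // Φ.vertex d = v} :=
    ⟨Φ.trace p.1.1.1 p.2.1, p.2.2⟩
  let turn (d : {d // Φ.vertex d = v}) : {d // Φ.vertex d = v} :=
    ⟨Φ.turn d.1, (Φ.vertex_turn _).trans d.2⟩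
  have hturn : Function.Injective turn := fun d d' h => Subtype.ext <|
    Φ.turn_involutive.injective (congrArg Subtype.val h)
  have htime (p : Σ c : T, {i // (walk c.1).verts i = v}) :
      (p.2.1 : ℕ) ≠ 0 ∧ (p.2.1 : ℕ) ≤ Φ.returnTime p.1.1.1 := by
    obtain ⟨⟨c, -⟩, i, hi⟩ := p
    have hne {n : ℕ} (hn : Φ.vertex (Φ.trace c.1 n) = s) : (i : ℕ) ≠ n := fun h =>
      hv (hi.symm.trans ((congrArg (fun i => Φ.vertex (Φ.trace c.1 i)) h).trans hn))
    exact ⟨hne c.2, Nat.le_of_lt_succ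
      (lt_of_le_of_ne (Nat.le_of_lt_succ i.2) (hne c.vertex_trace_returnTime_add_one))⟩
  have hvisit : Function.Injective visit := by
    intro p q h
    obtain ⟨hc, hi⟩ := Root.trace_injective (htime p).2 (htime q).2 (congrArg Subtype.val h)
    obtain ⟨⟨c, _⟩, i, _⟩ := p
    obtain ⟨⟨c', _⟩, j, _⟩ := q
    obtain rfl : c = c' := hc
    obtain rfl : i = j := Fin.ext hi
    rfl
  have := two_mul_card_le_of_injective hvisit (hturn.comp hvisit) fun p q h => by
    obtain ⟨j, hj⟩ := Nat.exists_eq_succ_of_ne_zero (htime q).1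
    have htrace : Φ.trace p.1.1.1 p.2.1 = Φ.turn (Φ.trace q.1.1.1 q.2.1) := congrArg Subtype.val h
    rw [hj, turn_trace_succ] at htrace
    refine hT _ q.1.2 ?_
    rw [← eq_reversal_of_trace_eq_flip_trace (htime p).2 (by have := htime q; omega) htrace]
    exact p.1.2
  rw [Nat.card_sigma] at this
  exact (Finset.sum_coe_sort T fun c => (walk c).vertCount v) ▸ this

theorem two_mul_card_walk_eq_le [Finite D] (hloop : G.LoopFree) (W : G.Walk) :
    2 * Nat.card {c : Φ.Root // walk c = W} ≤
      Nat.card {d // Φ.edge d = W.edges ⟨0, W.len_pos⟩} := by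
  have hedge (c : {c : Φ.Root // walk c = W}) :
      Φ.edge c.1.1 = W.edges ⟨0, W.len_pos⟩ := by
    obtain ⟨c, rfl⟩ := c
    rfl
  refine two_mul_card_le_of_injective (g := fun c => ⟨c.1.1, hedge c⟩)
    (h := fun c => ⟨Φ.flip c.1.1, (Φ.edge_flip _).trans (hedge c)⟩) (fun c c' h => ?_)
    (fun c c' h => ?_) fun c c' h => ?_
  · exact Subtype.ext (Subtype.ext (Subtype.mk.inj h))
  · exact Subtype.ext (Subtype.ext (Φ.flip_involutive.injective (Subtype.mk.inj h)))
  · exact Φ.vertex_flip_ne hloop c'.1.1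
      ((congrArg Φ.vertex (Subtype.mk.inj h)).symm.trans (c.1.2.trans c'.1.2.symm))

end FlagSystem

open Classical in
theorem exists_packing_of_family {ι : Type*} [Fintype ι] {s : V} {W : ι → G.Walk}
    (hW : ∀ i, (W i).IsSCycle s) (hload : ∀ v ≠ s, ∑ i, (W i).vertCount v ≤ 2)
    (hmult : ∀ W', Nat.card {i // W i = W'} ≤ 2) :
    ∃ y : G.Walk →₀ ℝ, G.IsSCyclePacking s y ∧ (∀ W', y W' = 0 ∨ y W' = 1 / 2 ∨ y W' = 1) ∧
      packingSize y = Fintype.card ι / 2 := by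
  let y : G.Walk →₀ ℝ := ∑ i, Finsupp.single (W i) (1 / 2)
  have hy (W' : G.Walk) : y W' = Nat.card {i // W i = W'} * (1 / 2) := by
    rw [Nat.card_eq_fintype_card, Fintype.card_subtype, ← nsmul_eq_mul, ← sum_const, sum_filter,
      Finsupp.finsetSum_apply]
    simp only [Finsupp.single_apply]
  have hsum (g : G.Walk → ℝ) : ∑ W' ∈ y.support, g W' * y W' = (∑ i, g (W i)) * (1 / 2) := by
    change y.sum (fun W' r => g W' * r) = _
    rw [← Finsupp.sum_finsetSum_index (by simp) fun _ _ _ => mul_add .., sum_mul]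
    exact sum_congr rfl fun i _ => Finsupp.sum_single_index (mul_zero _)
  refine ⟨y, ⟨fun W' => ?_, fun W' hW' => ?_, fun v hv => ?_⟩, fun W' => ?_, ?_⟩
  · rw [hy]
    positivity
  · rw [hy] at hW'
    obtain ⟨i, rfl⟩ := (Nat.card_ne_zero.1 (Nat.cast_ne_zero.1 (left_ne_zero_of_mul hW'))).1
    exact hW i
  · rw [hsum]
    have : ∑ i, ((W i).vertCount v : ℝ) ≤ 2 := by exact_mod_cast hload v hv
    linarith
  · have := hmult W'
    rw [hy]
    interval_cases Nat.card {i // W i = W'} <;> norm_num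
  · have := hsum fun _ => 1
    simp only [one_mul, sum_const, card_univ, nsmul_eq_mul, mul_one] at this
    rw [packingSize, this]
    ring

theorem FlagSystem.exists_packing {s : V} {D : Type*} [Finite D] (Φ : FlagSystem G s D)
    (hloop : G.LoopFree) (hedge : ∀ e, Nat.card {d // Φ.edge d = e} ≤ 4)
    (hvertex : ∀ v ≠ s, Nat.card {d // Φ.vertex d = v} ≤ 4) :
    ∃ y : G.Walk →₀ ℝ, G.IsSCyclePacking s y ∧ (∀ W, y W = 0 ∨ y W = 1 / 2 ∨ y W = 1) ∧
      packingSize y = Nat.card Φ.Root / 4 := by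
  classical
  have := Fintype.ofFinite Φ.Root
  obtain ⟨T, hcard, hT⟩ :=
    exists_transversal_of_involutive reversal_involutive (reversal_ne (Φ := Φ) hloop)
  have hload (v : V) (hv : v ≠ s) : ∑ c : T, (walk c.1).vertCount v ≤ 2 := by
    have := two_mul_sum_vertCount_walk_le hT hv
    have := hvertex v hv
    rw [Finset.sum_coe_sort T fun c => (walk c).vertCount v]
    omega
  have hmult (W : G.Walk) : Nat.card {c : T // walk c.1 = W} ≤ 2 := by
    have hle : Nat.card {c : T // walk c.1 = W} ≤ Nat.card {c : Φ.Root // walk c = W} :=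
      Nat.card_le_card_of_injective (fun c => ⟨c.1.1, c.2⟩) fun c c' h =>
        Subtype.ext (Subtype.ext (Subtype.mk.inj h))
    have := two_mul_card_walk_eq_le hloop W (Φ := Φ)
    have := hedge (W.edges ⟨0, W.len_pos⟩)
    omega
  obtain ⟨y, hy, hhalf, hsize⟩ :=
    exists_packing_of_family (fun c : T => isSCycle_walk hloop hedge c.1) hload hmult
  refine ⟨y, hy, hhalf, ?_⟩
  rw [hsize, Nat.card_eq_fintype_card, hcard, Fintype.card_coe]
  push_cast
  ring

section Multiplicities

variable (G) in
/-- The copies of edges at `v`, if every edge `e` is replaced by `m e` parallel copies. -/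
abbrev EdgeCopyAt (m : E → ℕ) (v : V) : Type := {p : Σ e, Fin (m e) // v ∈ G.ends p.1}

theorem card_edgeCopyAt [Fintype E] (m : E → ℕ) (v : V) [DecidablePred fun e => v ∈ G.ends e] :
    Nat.card (G.EdgeCopyAt m v) = ∑ e with v ∈ G.ends e, m e := by
  rw [← sum_subtype_eq_sum_filter, subtype_univ]
  rw [Nat.card_congr (Equiv.subtypeSigmaEquiv (fun e => Fin (m e)) fun e => v ∈ G.ends e)]
  simp

theorem ncard_edgeCopyAt_le (m : E → ℕ) (v : V) (e : E) :
    ((fun p : G.EdgeCopyAt m v => p.1.1) ⁻¹' {e}).ncard ≤ m e := by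
  let copy (i : {p : G.EdgeCopyAt m v // p.1.1 = e}) : Fin (m e) :=
    Fin.cast (congrArg m i.2) i.1.1.2
  refine (Nat.card_le_card_of_injective copy ?_).trans_eq (Nat.card_fin _)
  rintro ⟨⟨⟨e, i⟩, _⟩, rfl⟩ ⟨⟨⟨e', j⟩, _⟩, h⟩ hij
  obtain rfl : e' = e := h
  obtain rfl : i = j := hij
  rfl

variable {s : V} {m : E → ℕ}

theorem exists_involutive_edgeCopyAt [Finite E] {v : V} {k : ℕ}
    (hcard : Nat.card (G.EdgeCopyAt m v) = k + k) (hm : ∀ e, v ∈ G.ends e → m e ≤ k) :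
    ∃ turn : G.EdgeCopyAt m v → G.EdgeCopyAt m v,
      Function.Involutive turn ∧ ∀ p, (turn p).1.1 ≠ p.1.1 := by
  refine exists_involutive_forall_ne (fun p => p.1.1) hcard fun e => ?_
  by_cases he : v ∈ G.ends e
  · exact (ncard_edgeCopyAt_le m v e).trans (hm e he)
  · refine (congrArg Set.ncard (Set.eq_empty_of_forall_notMem ?_)).trans_le (by simp)
    rintro p rfl
    exact he p.2

open Classical in
/-- The flag system on the copies of edges in which trails are continued at `v` by `turn v`. -/
noncomputable def flagSystem
    (turn : ∀ v, G.EdgeCopyAt m v → G.EdgeCopyAt m v)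
    (hinv : ∀ v, Function.Involutive (turn v))
    (hne : ∀ v ≠ s, ∀ p, (turn v p).1.1 ≠ p.1.1) :
    FlagSystem G s (Σ v, G.EdgeCopyAt m v) where
  vertex d := d.1
  edge d := d.2.1.1
  flip d := ⟨Sym2.Mem.other d.2.2, d.2.1, Sym2.other_mem d.2.2⟩
  turn d := ⟨d.1, turn d.1 d.2⟩
  flip_involutive := by
    rintro ⟨v, p, hp⟩
    refine Sigma.subtype_ext (Sym2.other_invol hp _) rfl
  turn_involutive d := Sigma.ext rfl (heq_of_eq (hinv d.1 d.2))
  edge_flip _ := rfl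
  vertex_turn _ := rfl
  ends_edge d := (Sym2.other_spec d.2.2).symm
  edge_turn_ne d hd := hne d.1 hd d.2

variable {turn : ∀ v, G.EdgeCopyAt m v → G.EdgeCopyAt m v}
  {hinv : ∀ v, Function.Involutive (turn v)} {hne : ∀ v ≠ s, ∀ p, (turn v p).1.1 ≠ p.1.1}

theorem card_edge_flagSystem_le (hloop : G.LoopFree) (e : E) :
    Nat.card {d // (flagSystem turn hinv hne).edge d = e} ≤ 2 * m e := by
  have := Nat.finite_of_card_ne_zero (hloop.card_ends e ▸ two_ne_zero)
  let copy (d : {d // (flagSystem turn hinv hne).edge d = e}) :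
      {v // v ∈ G.ends e} × Fin (m e) :=
    ⟨⟨d.1.1, d.2.subst (motive := fun e => d.1.1 ∈ G.ends e) d.1.2.2⟩,
      Fin.cast (congrArg m d.2) d.1.2.1.2⟩
  refine (Nat.card_le_card_of_injective copy ?_).trans_eq ?_
  · rintro ⟨⟨v, ⟨e, i⟩, _⟩, rfl⟩ ⟨⟨v', ⟨e', j⟩, _⟩, h⟩ hcopy
    obtain rfl : e' = e := h
    obtain ⟨rfl, rfl⟩ : v = v' ∧ i = j := Prod.ext_iff.1 hcopy |>.imp Subtype.mk.inj id
    rfl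
  · rw [Nat.card_prod, Nat.card_fin, hloop.card_ends]

theorem card_vertex_flagSystem (v : V) :
    Nat.card {d // (flagSystem turn hinv hne).vertex d = v} = Nat.card (G.EdgeCopyAt m v) :=
  Nat.card_congr (Equiv.sigmaSubtype v)

end Multiplicities

theorem exists_packing_of_halfIntegral [Finite V] [Fintype E] (hloop : G.LoopFree) {s : V}
    {f : E → ℝ} (hf : f ∈ G.edgePolytope s) (hhalf : HalfIntegral f)
    (hdeg : ∀ v, ∃ k : ℕ, G.weightedDegree v f = k) :
    ∃ y : G.Walk →₀ ℝ, G.IsSCyclePacking s y ∧ (∀ W, y W = 0 ∨ y W = 1 / 2 ∨ y W = 1) ∧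
      packingSize y = G.weightedDegree s f / 2 := by
  classical
  have hcopies (e : E) : ∃ m : ℕ, m ≤ 2 ∧ (m : ℝ) = 2 * f e := by
    rcases hhalf e with h | h | h
    exacts [⟨0, by simp [h]⟩, ⟨1, by simp [h]⟩, ⟨2, by simp [h]⟩]
  choose m hm_le hm using hcopies
  have hcard (v : V) : (Nat.card (G.EdgeCopyAt m v) : ℝ) = 2 * G.weightedDegree v f := by
    rw [card_edgeCopyAt, weightedDegree_apply, mul_sum]
    push_cast
    exact sum_congr rfl fun e _ => hm e
  have hturn (v : V) : ∃ turn : G.EdgeCopyAt m v → G.EdgeCopyAt m v,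
      Function.Involutive turn ∧ (v ≠ s → ∀ p, (turn p).1.1 ≠ p.1.1) := by
    obtain rfl | hv := eq_or_ne v s
    · exact ⟨id, fun _ => rfl, fun h => absurd rfl h⟩
    obtain ⟨k, hk⟩ := hdeg v
    have hcard_eq : Nat.card (G.EdgeCopyAt m v) = k + k := by
      rw [← Nat.cast_inj (R := ℝ), hcard, hk]
      push_cast
      ring
    obtain ⟨turn, hinv, hne⟩ := exists_involutive_edgeCopyAt hcard_eq fun e he =>
      Nat.cast_le.1 (hm e ▸ hk ▸ (hf.2 v hv).2 e he)
    exact ⟨turn, hinv, fun _ => hne⟩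
  choose turn hinv hne using hturn
  obtain ⟨y, hy, hyhalf, hsize⟩ := (flagSystem turn hinv hne).exists_packing hloop
    (fun e => (card_edge_flagSystem_le hloop e).trans (Nat.mul_le_mul_left 2 (hm_le e)))
    fun v hv => by
      rw [card_vertex_flagSystem, ← Nat.cast_le (α := ℝ), hcard]
      have := (hf.2 v hv).1
      norm_num
      linarith
  refine ⟨y, hy, hyhalf, ?_⟩
  rw [hsize, card_vertex_flagSystem, hcard]
  ring

/-! ### Duality -/

section Duality

variable {s : V}

theorem IsSCyclePacking.packingSize_le [Fintype V] {y : G.Walk →₀ ℝ}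
    (hy : G.IsSCyclePacking s y) {x : V → ℝ} (hx : G.IsSCycleCover s x) :
    packingSize y ≤ ∑ v, x v := calc
  packingSize y ≤ ∑ W ∈ y.support, y W * ∑ v, W.vertCount v * x v :=
    sum_le_sum fun W hW => le_mul_of_one_le_right (hy.1 W) <|
      (hx.2.2 W (hy.2.1 W (Finsupp.mem_support_iff.1 hW))).trans_eq (W.sum_vertCount_mul x).symm
  _ = ∑ v, x v * ∑ W ∈ y.support, W.vertCount v * y W := by
    simp only [mul_sum]
    rw [sum_comm]
    exact sum_congr rfl fun v _ => sum_congr rfl fun W _ => by ring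
  _ ≤ ∑ v, x v := by
    refine sum_le_sum fun v _ => ?_
    obtain rfl | hv := eq_or_ne v s
    · rw [hx.2.1, zero_mul]
    · exact mul_le_of_le_one_right (hx.1 v) (hy.2.2 v hv)

variable [Fintype {W : G.Walk // W.IsSCycle s}]

theorem exists_cover_packing_slackness [Finite V] (hloop : G.LoopFree) :
    ∃ (x : V → ℝ) (y : {W : G.Walk // W.IsSCycle s} → ℝ), G.IsSCycleCover s x ∧ 0 ≤ y ∧
      (∀ v ≠ s, ∑ W, W.1.vertCount v * y W ≤ 1) ∧
      (∀ v, x v ≠ 0 → ∑ W, W.1.vertCount v * y W = 1) ∧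
      ∀ W, y W ≠ 0 → ∑ i, x (W.1.verts i) = 1 := by
  classical
  have := Fintype.ofFinite V
  -- The row of `s` is zero, so complementary slackness forces `x s = 0`.
  let A : Matrix V {W : G.Walk // W.IsSCycle s} ℝ :=
    fun v W => if v = s then 0 else W.1.vertCount v
  have hA {v : V} (hv : v ≠ s) (W) : A v W = W.1.vertCount v := if_neg hv
  have hmulVec {v : V} (hv : v ≠ s) (y) : (A *ᵥ y) v = ∑ W, W.1.vertCount v * y W :=
    sum_congr rfl fun W _ => congrArg (· * y W) (hA hv W)
  obtain ⟨x, y, hx, hy, hcover, hpacking, hsum⟩ := exists_cover_packing_sum_eq (A := A)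
    (fun v W => by dsimp only [A]; positivity) fun W => by
      obtain ⟨v, hv, hpos⟩ := W.2.exists_vertCount_pos hloop
      exact ⟨v, by rw [hA hv]; exact_mod_cast hpos⟩
  have hvertex {v} (hv : x v ≠ 0) : (A *ᵥ y) v = 1 :=
    mulVec_eq_one_of_sum_eq hx hy hcover hpacking hsum hv
  have hxs : x s = 0 := by
    by_contra h
    simpa [Matrix.mulVec, dotProduct, A] using hvertex h
  have hvecMul (W) : (x ᵥ* A) W = ∑ i, x (W.1.verts i) := by
    rw [← Walk.sum_vertCount_mul]
    refine sum_congr rfl fun v _ => ?_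
    obtain rfl | hv := eq_or_ne v s
    · rw [hxs, zero_mul, mul_zero]
    · exact (congrArg (x v * ·) (hA hv W)).trans (mul_comm _ _)
  refine ⟨x, y, ⟨hx, hxs, fun W hW => hvecMul ⟨W, hW⟩ ▸ hcover ⟨W, hW⟩⟩, hy,
    fun v hv => hmulVec hv y ▸ hpacking v, fun v hv => ?_, fun W hW => ?_⟩
  · exact hmulVec (ne_of_apply_ne x (hxs ▸ hv)) y ▸ hvertex hv
  · exact hvecMul W ▸ vecMul_eq_one_of_sum_eq hx hy hcover hpacking hsum hW

theorem IsSCycleCover.sum_roundedCover_le [Fintype V] {x : V → ℝ} (hx : G.IsSCycleCover s x)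
    {y : {W : G.Walk // W.IsSCycle s} → ℝ} (hy : 0 ≤ y)
    (hvertex : ∀ v, x v ≠ 0 → ∑ W, W.1.vertCount v * y W = 1)
    (hcycle : ∀ W, y W ≠ 0 → ∑ i, x (W.1.verts i) = 1) :
    ∑ v, G.roundedCover s x v ≤ ∑ W, y W := calc
  ∑ v, G.roundedCover s x v = ∑ v, G.roundedCover s x v * ∑ W, W.1.vertCount v * y W := by
    refine sum_congr rfl fun v _ => ?_
    by_cases hv : x v = 0
    · rw [roundedCover_eq_zero hx.1 hv, zero_mul]
    · rw [hvertex v hv, mul_one]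
  _ = ∑ W, y W * ∑ i, G.roundedCover s x (W.1.verts i) := by
    simp only [← Walk.sum_vertCount_mul, mul_sum]
    rw [sum_comm]
    exact sum_congr rfl fun W _ => sum_congr rfl fun v _ => by ring
  _ ≤ ∑ W, y W := by
    refine sum_le_sum fun W _ => ?_
    by_cases hW : y W = 0
    · rw [hW, zero_mul]
    · exact mul_le_of_le_one_right (hy W) (hx.sum_roundedCover_le_one W.2 (hcycle W hW))

end Duality

theorem exists_halfIntegral_cover_packing [Fintype V] [Finite E] (hloop : G.LoopFree) (s : V) :
    ∃ (x : V → ℝ) (y : G.Walk →₀ ℝ), G.IsSCycleCover s x ∧ HalfIntegral x ∧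
      G.IsSCyclePacking s y ∧ (∀ W, y W = 0 ∨ y W = 1 / 2 ∨ y W = 1) ∧
      ∑ v, x v ≤ packingSize y := by
  have := Fintype.ofFinite E
  have := Walk.finite_isSCycle G s
  have := Fintype.ofFinite {W : G.Walk // W.IsSCycle s}
  obtain ⟨x, y, hx, hy, hpacking, hvertex, hcycle⟩ := exists_cover_packing_slackness (s := s) hloop
  obtain ⟨f, hf, hfdeg⟩ := exists_mem_edgePolytope hloop (fun W => W.2) hy hpacking
  obtain ⟨g, hg, hhalf, hdeg, hfg⟩ := exists_halfIntegral_mem_edgePolytope hloop hf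
  obtain ⟨z, hz, hzhalf, hsize⟩ := exists_packing_of_halfIntegral hloop hg hhalf hdeg
  refine ⟨G.roundedCover s x, z, hx.roundedCover, roundedCover_halfIntegral G s x, hz, hzhalf, ?_⟩
  have := hx.sum_roundedCover_le hy hvertex hcycle
  linarith

end Multigraph

/-- half-integral LP duality: the minimum size of an `s`-cycle
cover equals the maximum size of an `s`-cycle packing, and both optima are
attained by half-integral solutions. -/
theorem stmt14_lp_duality {V E : Type} [Fintype V] [Fintype E]
    (G : Multigraph V E) (hloop : G.LoopFree) (s : V) :
    ∃ (x : V → ℝ) (y : G.Walk →₀ ℝ),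
      G.IsSCycleCover s x ∧ Multigraph.HalfIntegral x ∧
      G.IsSCyclePacking s y ∧ (∀ W : G.Walk, y W = 0 ∨ y W = 1/2 ∨ y W = 1) ∧
      ∑ v, x v = Multigraph.packingSize y ∧
      (∀ x' : V → ℝ, G.IsSCycleCover s x' → ∑ v, x v ≤ ∑ v, x' v) ∧
      (∀ y' : G.Walk →₀ ℝ, G.IsSCyclePacking s y' →
        Multigraph.packingSize y' ≤ Multigraph.packingSize y) := by
  obtain ⟨x, y, hx, hxhalf, hy, hyhalf, hle⟩ :=
    Multigraph.exists_halfIntegral_cover_packing hloop s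
  exact ⟨x, y, hx, hxhalf, hy, hyhalf, le_antisymm hle (hy.packingSize_le hx),
    fun _ hx' => hle.trans (hy.packingSize_le hx'),
    fun _ hy' => (hy'.packingSize_le hx).trans hle⟩
end

section
/- Let G be a multigraph, let k ≥ 0 be an integer, and let v be a vertex of G such that there are more than k vertices u ≠ v with at least two parallel edges between u and v (i.e., v is incident to more than k double edges). Then every feedback vertex set of G of size at most k contains v. -/
namespace Multigraph

variable {V E : Type} {G : Multigraph V E} {S : Set V} {u v : V} {a b : E}

/-- The vertices `u` and `v` are distinct and joined by a double edge. Having two parallel edges is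
expressed without counting, so infinitely many parallel edges also form a double edge. -/
def DoubleAdj (G : Multigraph V E) (u v : V) : Prop :=
  u ≠ v ∧ {e : E | G.ends e = s(u, v)}.Nontrivial

theorem doubleAdj_of_two_le_card (huv : u ≠ v)
    (hcard : 2 ≤ Nat.card {e : E // G.ends e = s(u, v)}) : G.DoubleAdj u v :=
  ⟨huv, (Set.one_lt_ncard_iff_nontrivial_and_finite.mp hcard).1⟩

theorem card_le_encard_setOf_doubleAdj (G : Multigraph V E) (v : V) :
    (Nat.card {u : V // u ≠ v ∧ 2 ≤ Nat.card {e : E // G.ends e = s(u, v)}} : ℕ∞) ≤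
      {u | G.DoubleAdj u v}.encard :=
  (Set.ncard_le_encard _).trans <|
    Set.encard_le_encard fun _ hu => doubleAdj_of_two_le_card hu.1 hu.2

/-- The closed walk `u, v, u` along two edges `a` and `b`. For distinct parallel edges it is the
two-vertex cycle that a feedback vertex set has to meet. -/
def Walk.digon (ha : G.ends a = s(u, v)) (hb : G.ends b = s(u, v)) : G.Walk where
  len := 2
  len_pos := Nat.two_pos
  verts := ![u, v, u]
  edges := ![a, b]
  valid := Fin.forall_fin_two.mpr ⟨ha, hb.trans Sym2.eq_swap⟩

theorem Walk.isCycle_digon (ha : G.ends a = s(u, v)) (hb : G.ends b = s(u, v))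
    (huv : u ≠ v) (hab : a ≠ b) : (Walk.digon ha hb).IsCycle := by
  have edges_injective : Function.Injective ![a, b] := injective_pair_iff_ne.mpr hab
  have verts_injective : Function.Injective fun i : Fin 2 => ![u, v, u] i.castSucc := by
    simp [Function.Injective, Fin.forall_fin_two, huv, huv.symm]
  exact ⟨rfl, edges_injective, verts_injective⟩

theorem IsFVS.mem_or_mem_of_doubleAdj (hS : G.IsFVS S) (huv : G.DoubleAdj u v) :
    u ∈ S ∨ v ∈ S := by
  obtain ⟨hne, a, ha, b, hb, hab⟩ := huv
  obtain ⟨i, hi⟩ := hS (Walk.digon ha hb) (Walk.isCycle_digon ha hb hne hab)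
  change Fin 3 at i
  fin_cases i
  exacts [.inl hi, .inr hi, .inl hi]

theorem IsFVS.setOf_doubleAdj_subset (hS : G.IsFVS S) (hv : v ∉ S) :
    {u | G.DoubleAdj u v} ⊆ S :=
  fun _ hu => (hS.mem_or_mem_of_doubleAdj hu).resolve_right hv

end Multigraph

theorem stmt15_mem_fvs_of_many_double_edges_general {V E : Type}
    (G : Multigraph V E) (k : ℕ∞) (v : V) (h : k < {u | G.DoubleAdj u v}.encard) :
    ∀ S : Set V, G.IsFVS S → S.encard ≤ k → v ∈ S := by
  intro S hS hk
  by_contra hv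
  exact (hk.trans_lt h).not_ge (Set.encard_le_encard (hS.setOf_doubleAdj_subset hv))

/-- if a vertex `v` is joined by double edges to more than `k`
other vertices, then every feedback vertex set of size at most `k`
contains `v`. -/
theorem stmt15_mem_fvs_of_many_double_edges {V E : Type} [Fintype V] [Fintype E]
    (G : Multigraph V E) (k : ℕ) (v : V)
    (h : k < Nat.card {u : V // u ≠ v ∧ 2 ≤ Nat.card {e : E // G.ends e = s(u, v)}}) :
    ∀ S : Set V, G.IsFVS S → S.ncard ≤ k → v ∈ S := by
  intro S hS hk
  exact stmt15_mem_fvs_of_many_double_edges_general G k v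
    ((Nat.cast_lt.mpr h).trans_le (G.card_le_encard_setOf_doubleAdj v)) S hS
    (S.toFinite.cast_ncard_eq ▸ Nat.cast_le.mpr hk)
end

section
/- Let G=(V,E) be a multigraph without self-loops in which every vertex has degree at least three, let s ∈ V, and let x be a half-integral minimum s-cycle cover of G. If 2·x(V) < d(s), then x⁻¹(1) ≠ ∅, i.e., x takes the value 1 on at least one vertex. -/
/-!
Suppose that `x v < 1` for all `v`. From each edge `e` at `s`, grow a path away from `s` as long as
its tip `v` has value `0`. Since `d(v) ≥ 2`, another edge leads on from `v`, and it cannot lead back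
to the path: together they would form an `s`-cycle of value `0`, with the part from `s` to the
repeated vertex traversed twice. So the path eventually reaches a vertex of nonzero value.

Paths starting with different edges at `s` end at different vertices. If two of them had the same
tip, strip off the stretch they share there; from where they diverge, one back to `s` and the other
out of `s` make up an `s`-cycle, of value less than `1`. Hence `d(s)` is at most the number of
vertices of nonzero value, and this is at most `2·x(V)`.
-/

namespace Multigraph

variable {V E : Type} {G : Multigraph V E} {s v w : V} {e f : E} {x : V → ℝ}
  {vs ws : List V} {es fs : List E}

theorem exists_mem_ends_ne_of_one_lt_degree (hv : 1 < G.degree v) (e : E) :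
    ∃ f, v ∈ G.ends f ∧ f ≠ e := by
  by_contra! hunique
  have : Subsingleton {f // v ∈ G.ends f} :=
    ⟨fun a b ↦ Subtype.ext ((hunique a a.2).trans (hunique b b.2).symm)⟩
  exact hv.not_ge (Finite.card_le_one_iff_subsingleton.mpr this)

/-- A walk, possibly of length `0`, given by its vertex list and its edge list. Unlike `Walk`, it
can be reversed, cut and glued without reindexing. -/
inductive IsRoute (G : Multigraph V E) : List V → List E → Prop
  | single (v : V) : IsRoute G [v] []
  | cons {u v : V} {vs : List V} {e : E} {es : List E} (he : G.ends e = s(u, v))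
      (h : IsRoute G (v :: vs) es) : IsRoute G (u :: v :: vs) (e :: es)

namespace IsRoute

theorem length_eq (h : G.IsRoute vs es) : vs.length = es.length + 1 := by
  induction h with
  | single => rfl
  | cons _ _ ih => simp only [List.length_cons] at ih ⊢; omega

theorem ends_getElem (h : G.IsRoute vs es) (i : ℕ) (hi : i < es.length) :
    G.ends es[i] = s(vs[i]'(by have := h.length_eq; omega),
      vs[i + 1]'(by have := h.length_eq; omega)) := by
  induction h generalizing i with
  | single => simp at hi
  | cons he _ ih =>
    cases i with
    | zero => simpa using he
    | succ i => simpa using ih i (by simpa using hi)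

theorem mem_of_mem_ends (h : G.IsRoute vs es) (he : e ∈ es) (hv : v ∈ G.ends e) : v ∈ vs := by
  obtain ⟨i, hi, rfl⟩ := List.mem_iff_getElem.mp he
  rw [h.ends_getElem i hi, Sym2.mem_iff] at hv
  rcases hv with rfl | rfl <;> exact List.getElem_mem _

theorem drop (h : G.IsRoute vs es) (n : ℕ) (hn : n < vs.length) :
    G.IsRoute (vs.drop n) (es.drop n) := by
  induction n generalizing vs es with
  | zero => simpa using h
  | succ n ih =>
    cases h with
    | single => simp at hn
    | cons _ h => simpa using ih h (by simpa using hn)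

theorem reverse_append (h : G.IsRoute (w :: vs) es) (h' : G.IsRoute (w :: ws) fs) :
    G.IsRoute (vs.reverse ++ w :: ws) (es.reverse ++ fs) := by
  induction vs generalizing w es ws fs with
  | nil => cases h; simpa using h'
  | cons v vs ih =>
    cases h with
    | cons he h => simpa using ih h (.cons (he.trans Sym2.eq_swap) h')

/-- A route with at least one edge, as a `Walk`. -/
def toWalk (h : G.IsRoute vs es) (hes : es ≠ []) : G.Walk where
  len := es.length
  len_pos := List.length_pos_of_ne_nil hes
  verts i := vs[i.val]'(by have := h.length_eq; omega)
  edges i := es[i.val]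
  valid i := h.ends_getElem i i.isLt

theorem sum_verts_toWalk {M : Type*} [AddCommMonoid M] (h : G.IsRoute vs es) (hes : es ≠ [])
    (x : V → M) : ∑ i, x ((h.toWalk hes).verts i) = (vs.map x).sum := by
  rw [← Fin.sum_univ_fun_getElem]
  exact Fintype.sum_equiv (finCongr h.length_eq.symm) _ _ fun _ ↦ rfl

theorem isSCycle_toWalk [DecidableEq E] (h : G.IsRoute (s :: vs ++ [s]) es) (hes : es ≠ [])
    (hs : s ∉ vs) (hturn : es.IsChain (· ≠ ·)) (hcount : ∀ e, es.count e ≤ 2) :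
    (h.toWalk hes).IsSCycle s := by
  have hlen : vs.length + 1 = es.length := by simpa using h.length_eq
  refine ⟨rfl, ?_, ?_, ?_, fun e ↦ ?_⟩
  · simp [Walk.finish, toWalk, ← hlen]
  · rintro ⟨i, hi⟩ hi0 hilast
    simp only [toWalk] at hi hilast ⊢
    obtain ⟨j, rfl⟩ : ∃ j, i = j + 1 :=
      Nat.exists_eq_succ_of_ne_zero fun h ↦ hi0 (Fin.ext h)
    have hj : j < vs.length := by
      have : j + 1 ≠ es.length := fun h ↦ hilast (Fin.ext h)
      omega
    intro hjs
    simp only [List.cons_append, List.getElem_cons_succ, List.getElem_append_left hj] at hjs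
    exact hs (hjs ▸ List.getElem_mem hj)
  · rintro ⟨i, hi⟩ ⟨j, hj⟩ hij
    simp only at hij
    subst hij
    exact List.isChain_iff_getElem.mp hturn i hj
  · rw [Nat.card_eq_fintype_card, Fintype.card_subtype]
    exact (Fin.card_filter_univ_eq_vector_get_eq_count e ⟨es, rfl⟩).trans_le (hcount e)

end IsRoute

theorem IsSCycleCover.one_le_sum_of_isRoute [DecidableEq E] (hx : G.IsSCycleCover s x)
    (h : G.IsRoute (s :: vs ++ [s]) es) (hs : s ∉ vs) (hturn : es.IsChain (· ≠ ·))
    (hcount : ∀ e, es.count e ≤ 2) : 1 ≤ (vs.map x).sum := by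
  have hes : es ≠ [] := by rintro rfl; simpa using h.length_eq
  have hcover := hx.2.2 _ (h.isSCycle_toWalk hes hs hturn hcount)
  rw [h.sum_verts_toWalk] at hcover
  simpa [hx.2.1] using hcover

/-- `G.IsTrailTo s vs es`: the edge list `es` is repetition-free and leads through the vertices
`vs` into `s`, which is not among `vs`. -/
structure IsTrailTo (G : Multigraph V E) (s : V) (vs : List V) (es : List E) : Prop where
  isRoute : G.IsRoute (vs ++ [s]) es
  notMem : s ∉ vs
  nodup_edges : es.Nodup

theorem IsTrailTo.ne_nil (h : G.IsTrailTo s (v :: vs) es) : es ≠ [] := by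
  rintro rfl
  simpa using h.isRoute.length_eq

theorem IsTrailTo.drop (h : G.IsTrailTo s vs es) (n : ℕ) (hn : n < vs.length) :
    G.IsTrailTo s (vs.drop n) (es.drop n) where
  isRoute := by
    rw [← List.drop_append_of_le_length hn.le]
    exact h.isRoute.drop n (by simp; omega)
  notMem hmem := h.notMem (List.mem_of_mem_drop hmem)
  nodup_edges := h.nodup_edges.sublist (List.drop_sublist n es)

theorem IsSCycleCover.one_le_sum_of_isTrailTo (hx : G.IsSCycleCover s x)
    (h : G.IsTrailTo s (v :: vs) es) (h' : G.IsTrailTo s (v :: ws) fs)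
    (hhead : es.head? ≠ fs.head?) : 1 ≤ (vs.map x).sum + x v + (ws.map x).sum := by
  classical
  have hroute : G.IsRoute (s :: (vs.reverse ++ v :: ws) ++ [s]) (es.reverse ++ fs) := by
    simpa using IsRoute.reverse_append (vs := vs ++ [s]) h.isRoute h'.isRoute
  have hs : s ∉ vs.reverse ++ v :: ws := by
    have := h.notMem
    have := h'.notMem
    simp_all
  have hturn : (es.reverse ++ fs).IsChain (· ≠ ·) := by
    refine List.isChain_append.mpr ⟨(List.nodup_reverse.mpr h.nodup_edges).isChain,
      h'.nodup_edges.isChain, ?_⟩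
    rintro e he _ he' rfl
    rw [List.getLast?_reverse] at he
    exact hhead (he.trans he'.symm)
  have hcount (e : E) : (es.reverse ++ fs).count e ≤ 2 := by
    have := List.nodup_iff_count_le_one.mp h.nodup_edges e
    have := List.nodup_iff_count_le_one.mp h'.nodup_edges e
    rw [List.count_append, List.count_reverse]
    omega
  simpa [add_assoc] using hx.one_le_sum_of_isRoute hroute hs hturn hcount

theorem IsSCycleCover.one_le_sum_of_ends (hx : G.IsSCycleCover s x)
    (h : G.IsTrailTo s (v :: vs) es) (hf : G.ends f = s(s, v)) (hfes : f ∉ es) :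
    1 ≤ x v + (vs.map x).sum := by
  classical
  have hroute : G.IsRoute (s :: (v :: vs) ++ [s]) (f :: es) := .cons hf h.isRoute
  have hnodup : (f :: es).Nodup := List.nodup_cons.mpr ⟨hfes, h.nodup_edges⟩
  simpa using hx.one_le_sum_of_isRoute hroute h.notMem hnodup.isChain fun e ↦
    (List.nodup_iff_count_le_one.mp hnodup e).trans one_le_two

/-- The `s`-cycle behind this runs along the trail from `s` to `v`, crosses `f` to `w` and returns
to `s` along the rest of the trail, which it therefore traverses in both directions. -/
theorem IsSCycleCover.exists_ne_zero_of_mem (hx : G.IsSCycleCover s x)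
    (h : G.IsTrailTo s (v :: vs) es) (hf : G.ends f = s(w, v)) (hfes : f ∉ es)
    (hw : w ∈ v :: vs ++ [s]) : ∃ u ∈ v :: vs, x u ≠ 0 := by
  by_contra! hzero
  have hsum {us : List V} (hus : ∀ u ∈ us, u ∈ v :: vs) : (us.map x).sum = 0 :=
    List.sum_eq_zero (List.forall_mem_map.mpr fun u hu ↦ hzero u (hus u hu))
  have hsum_vs : (vs.map x).sum = 0 := hsum fun _ ↦ List.mem_cons_of_mem v
  have hxv : x v = 0 := hzero v List.mem_cons_self
  by_cases hws : w = s
  · have := hx.one_le_sum_of_ends h (hws ▸ hf) hfes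
    linarith
  · obtain ⟨n, hn, rfl⟩ : ∃ n, ∃ hn : n < (v :: vs).length, (v :: vs)[n] = w :=
      List.mem_iff_getElem.mp (by simpa [hws] using hw)
    have hlong : G.IsTrailTo s ((v :: vs)[n] :: v :: vs) (f :: es) :=
      ⟨.cons hf h.isRoute, List.not_mem_cons_of_ne_of_not_mem (Ne.symm hws) h.notMem,
        List.nodup_cons.mpr ⟨hfes, h.nodup_edges⟩⟩
    have hshort := h.drop n hn
    rw [List.drop_eq_getElem_cons hn] at hshort
    have hhead : (f :: es).head? ≠ (es.drop n).head? := fun heq ↦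
      hfes (List.mem_of_mem_drop (List.mem_of_head? heq.symm))
    have hone := hx.one_le_sum_of_isTrailTo hlong hshort hhead
    rw [hsum fun _ ↦ id, hzero _ (List.getElem_mem hn), hsum fun _ ↦ List.mem_of_mem_drop] at hone
    norm_num at hone

/-- `G.IsZeroPath s x e v vs es`: a path with edges `es` from the tip `v` through the vertices `vs`
into `s`, whose vertices other than `v` have `x`-value `0` and whose edge at `s` is `e`. The lists
start at the tip, so that growing the path away from `s` is `List.cons`. -/
structure IsZeroPath (G : Multigraph V E) (s : V) (x : V → ℝ) (e : E) (v : V) (vs : List V)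
    (es : List E) : Prop extends G.IsTrailTo s (v :: vs) es where
  nodup_verts : (v :: vs).Nodup
  eq_zero : ∀ u ∈ vs, x u = 0
  getLast?_eq : es.getLast? = some e

namespace IsZeroPath

theorem sum_eq_zero (h : G.IsZeroPath s x e v vs es) : (vs.map x).sum = 0 :=
  List.sum_eq_zero (by simpa using h.eq_zero)

theorem single (hx : G.IsSCycleCover s x) (he : G.ends e = s(v, s)) :
    G.IsZeroPath s x e v [] [e] where
  isRoute := .cons he (.single s)
  notMem := by
    classical
    intro hsv
    obtain rfl : s = v := List.mem_singleton.mp hsv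
    have hloop : G.IsRoute (s :: [] ++ [s]) [e] := .cons he (.single s)
    have := hx.one_le_sum_of_isRoute hloop List.not_mem_nil (.singleton e) fun f ↦
      List.count_le_length.trans one_le_two
    norm_num at this
  nodup_edges := List.nodup_singleton e
  nodup_verts := List.nodup_singleton v
  eq_zero := by simp
  getLast?_eq := rfl

theorem notMem_edges (h : G.IsZeroPath s x e v vs es) (hf : v ∈ G.ends f)
    (hhead : es.head? ≠ some f) : f ∉ es := by
  intro hfes
  obtain ⟨g, gs, rfl⟩ := List.exists_cons_of_ne_nil (List.ne_nil_of_mem hfes)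
  have hfgs : f ∈ gs := by
    refine (List.mem_cons.mp hfes).resolve_left ?_
    rintro rfl
    exact hhead rfl
  have hroute : G.IsRoute (vs ++ [s]) gs := by simpa using h.isRoute.drop 1 (by simp)
  have hv : v ∈ vs ++ [s] := hroute.mem_of_mem_ends hfgs hf
  have := h.nodup_verts
  have := h.notMem
  simp_all

theorem cons (hx : G.IsSCycleCover s x) (h : G.IsZeroPath s x e v vs es) (hv : x v = 0)
    (hf : G.ends f = s(w, v)) (hhead : es.head? ≠ some f) :
    G.IsZeroPath s x e w (v :: vs) (f :: es) := by
  have hfes : f ∉ es := h.notMem_edges (by simp [hf]) hhead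
  have hzero : ∀ u ∈ v :: vs, x u = 0 := List.forall_mem_cons.mpr ⟨hv, h.eq_zero⟩
  have hw : w ∉ v :: vs ++ [s] := fun hmem ↦
    let ⟨u, hu, hxu⟩ := hx.exists_ne_zero_of_mem h.toIsTrailTo hf hfes hmem
    hxu (hzero u hu)
  have hws : s ≠ w := by rintro rfl; simp at hw
  exact
    { isRoute := .cons hf h.isRoute
      notMem := List.not_mem_cons_of_ne_of_not_mem hws h.notMem
      nodup_edges := List.nodup_cons.mpr ⟨hfes, h.nodup_edges⟩
      nodup_verts := List.nodup_cons.mpr ⟨mt (List.mem_append_left _) hw, h.nodup_verts⟩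
      eq_zero := hzero
      getLast?_eq := (List.getLast?_cons_of_ne_nil h.ne_nil).trans h.getLast?_eq }

/-- Where two paths with the same tip diverge, they glue to an `s`-cycle that meets only one vertex
of nonzero value, and that vertex only once. -/
theorem head?_eq (hx : G.IsSCycleCover s x) (hv : x v < 1) (h : G.IsZeroPath s x e v vs es)
    (h' : G.IsZeroPath s x f v ws fs) : es.head? = fs.head? := by
  by_contra hhead
  have := hx.one_le_sum_of_isTrailTo h.toIsTrailTo h'.toIsTrailTo hhead
  rw [h.sum_eq_zero, h'.sum_eq_zero] at this
  linarith

theorem eq_of_mem_ends (h : G.IsZeroPath s x e v vs (f :: es)) (hs : s ∈ G.ends f) : e = f := by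
  cases vs with
  | nil =>
    have hes : es = [] := List.length_eq_zero_iff.mp (by simpa using h.isRoute.length_eq.symm)
    simpa [hes, eq_comm] using h.getLast?_eq
  | cons u us =>
    have hf : G.ends f = s(v, u) := h.isRoute.ends_getElem 0 (by simp)
    have := h.notMem
    simp_all

theorem exists_tail (h : G.IsZeroPath s x e v vs (f :: es)) (hs : s ∉ G.ends f) :
    ∃ u us, G.ends f = s(v, u) ∧ x u = 0 ∧ G.IsZeroPath s x e u us es := by
  cases vs with
  | nil =>
    have hf : G.ends f = s(v, s) := h.isRoute.ends_getElem 0 (by simp)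
    simp [hf] at hs
  | cons u us =>
    have htail : G.IsTrailTo s (u :: us) es := h.toIsTrailTo.drop 1 (by simp)
    obtain ⟨hu, hus⟩ := List.forall_mem_cons.mp h.eq_zero
    exact ⟨u, us, h.isRoute.ends_getElem 0 (by simp), hu,
      { toIsTrailTo := htail
        nodup_verts := h.nodup_verts.of_cons
        eq_zero := hus
        getLast?_eq :=
          (List.getLast?_cons_of_ne_nil htail.ne_nil).symm.trans h.getLast?_eq }⟩

theorem edge_unique (hx : G.IsSCycleCover s x) (hv : x v < 1)
    (h : G.IsZeroPath s x e v vs es) (h' : G.IsZeroPath s x f v ws fs) : e = f := by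
  induction es generalizing v vs ws fs with
  | nil => exact absurd rfl h.ne_nil
  | cons g gs ih =>
    obtain ⟨gs', rfl⟩ := List.head?_eq_some_iff.mp (h.head?_eq hx hv h').symm
    by_cases hs : s ∈ G.ends g
    · rw [h.eq_of_mem_ends hs, h'.eq_of_mem_ends hs]
    · obtain ⟨u, us, hgu, hu, htail⟩ := h.exists_tail hs
      obtain ⟨u', us', hgu', -, htail'⟩ := h'.exists_tail hs
      obtain rfl : u = u' := Sym2.congr_right.mp (hgu.symm.trans hgu')
      exact ih (hu ▸ one_pos) htail htail'

theorem exists_ne_zero [Finite V] (hx : G.IsSCycleCover s x)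
    (hdeg : ∀ v ≠ s, 1 < G.degree v) (he : s ∈ G.ends e) :
    ∃ v vs es, G.IsZeroPath s x e v vs es ∧ x v ≠ 0 := by
  by_contra! hzero
  have hlong (n : ℕ) : ∃ v vs es, G.IsZeroPath s x e v vs es ∧ vs.length = n := by
    induction n with
    | zero =>
      obtain ⟨v, hv⟩ := he
      exact ⟨v, [], [e], single hx (hv.trans Sym2.eq_swap), rfl⟩
    | succ n ih =>
      obtain ⟨v, vs, es, h, rfl⟩ := ih
      have hvs : v ≠ s := fun hvs ↦ h.notMem (hvs ▸ List.mem_cons_self)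
      obtain ⟨g, gs, rfl⟩ := List.exists_cons_of_ne_nil h.ne_nil
      obtain ⟨f, ⟨w, hf⟩, hfg⟩ := exists_mem_ends_ne_of_one_lt_degree (hdeg v hvs) g
      exact ⟨w, v :: vs, f :: g :: gs,
        h.cons hx (hzero v vs _ h) (hf.trans Sym2.eq_swap) (by simpa using hfg.symm), rfl⟩
  have := Fintype.ofFinite V
  obtain ⟨v, vs, es, h, hlen⟩ := hlong (Fintype.card V)
  have := h.nodup_verts.length_le_card
  rw [List.length_cons] at this
  omega

end IsZeroPath

theorem IsSCycleCover.degree_le_ncard_support [Finite V] (hx : G.IsSCycleCover s x)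
    (hlt : ∀ v, x v < 1) (hdeg : ∀ v ≠ s, 1 < G.degree v) :
    G.degree s ≤ (Function.support x).ncard := by
  have hpath (e : {e // s ∈ G.ends e}) :
      ∃ v : Function.support x, ∃ vs es, G.IsZeroPath s x e v vs es := by
    obtain ⟨v, vs, es, h, hv⟩ := IsZeroPath.exists_ne_zero hx hdeg e.2
    exact ⟨⟨v, hv⟩, vs, es, h⟩
  choose tip vs es htip using hpath
  refine Nat.card_le_card_of_injective tip fun e f hef ↦ Subtype.ext ?_
  exact (htip e).edge_unique hx (hlt _) (hef ▸ htip f)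

end Multigraph

theorem ncard_support_le_two_mul_sum {ι : Type*} [Fintype ι] {x : ι → ℝ}
    (hx : ∀ i, x i = 0 ∨ 1 / 2 ≤ x i) : ((Function.support x).ncard : ℝ) ≤ 2 * ∑ i, x i := by
  classical
  calc
    ((Function.support x).ncard : ℝ) = ∑ i, if x i ≠ 0 then 1 else 0 := by
      rw [Set.ncard_eq_toFinset_card', Finset.sum_boole]
      congr 2
      ext i
      simp
    _ ≤ ∑ i, 2 * x i := Finset.sum_le_sum fun i _ ↦ by
      rcases hx i with hi | hi
      · simp [hi]
      · rw [if_pos (by linarith)]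
        linarith
    _ = 2 * ∑ i, x i := (Finset.mul_sum _ _ _).symm

theorem stmt17_exists_one_of_large_degree_general {V E : Type} [Fintype V]
    (G : Multigraph V E) (s : V) (x : V → ℝ) (hdeg : ∀ v ≠ s, 2 ≤ G.degree v)
    (hx : G.IsSCycleCover s x) (hhalf : ∀ v, x v = 0 ∨ 1 / 2 ≤ x v)
    (h : 2 * ∑ v, x v < (G.degree s : ℝ)) :
    ∃ v : V, 1 ≤ x v := by
  by_contra! hlt
  have hdegree : (G.degree s : ℝ) ≤ (Function.support x).ncard :=
    mod_cast hx.degree_le_ncard_support hlt hdeg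
  exact h.not_ge (hdegree.trans (ncard_support_le_two_mul_sum hhalf))

/-- in a loop-free multigraph of minimum degree at least `3`,
if a half-integral minimum `s`-cycle cover `x` satisfies `2·x(V) < d(s)`,
then `x` takes the value `1` somewhere. -/
theorem stmt17_exists_one_of_large_degree {V E : Type} [Fintype V] [Fintype E]
    (G : Multigraph V E) (hloop : G.LoopFree) (hdeg : ∀ v : V, 3 ≤ G.degree v)
    (s : V) (x : V → ℝ)
    (hx : G.IsMinSCycleCover s x) (hhalf : Multigraph.HalfIntegral x)
    (h : 2 * ∑ v, x v < (G.degree s : ℝ)) :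
    ∃ v : V, x v = 1 := by
  obtain ⟨v, hv⟩ := stmt17_exists_one_of_large_degree_general G s x
    (fun v _ ↦ (Nat.le_succ 2).trans (hdeg v)) hx.1
    (fun v ↦ (hhalf v).imp_right fun hv ↦ by rcases hv with hv | hv <;> norm_num [hv]) h
  exact ⟨v, by rcases hhalf v with hv0 | hv0 | hv0 <;> linarith⟩
end
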